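/- arXiv:2310.18960 — 2 statements merged into one kernel-verified Lean document; each statement's English description precedes it below -/
import Mathlib

section
/- Let P = x + ∑_{v ∈ V} [0, v] be a zonotope in ℝ³ whose generator set V consists of pairwise linearly independent nonzero vectors spanning ℝ³, and suppose A(P,z) = λ for every nonzero z ∈ ℝ³, where λ is a constant. Then λ = 2·deg v for every v ∈ V in the hypergraph ℱ. -/
open scoped Pointwise BigOperators

noncomputable section

/-- Scalar product on `ℝ^d`. -/
def dotp {d : ℕ} (z x : Fin d → ℝ) : ℝ := ∑ i, z i * x i

/-- Number of vertices (extreme points) of a set. -/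
def nVert {d : ℕ} (S : Set (Fin d → ℝ)) : ℕ := (Set.extremePoints ℝ S).ncard

/-- `t⁻ = min {z·x : x ∈ P}`. -/
def tMin {d : ℕ} (P : Set (Fin d → ℝ)) (z : Fin d → ℝ) : ℝ := sInf (dotp z '' P)

/-- `t⁺ = max {z·x : x ∈ P}`. -/
def tMax {d : ℕ} (P : Set (Fin d → ℝ)) (z : Fin d → ℝ) : ℝ := sSup (dotp z '' P)

/-- `A(P,z)`: the average number of vertices of the sections `P ∩ {x : z·x = t}`
over `t ∈ [t⁻, t⁺]`. -/
def avgVert {d : ℕ} (P : Set (Fin d → ℝ)) (z : Fin d → ℝ) : ℝ :=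
  (tMax P z - tMin P z)⁻¹ *
    ∫ t in tMin P z..tMax P z, ((nVert (P ∩ {x | dotp z x = t}) : ℝ))

/-- A convex polytope: the convex hull of a finite point set. -/
def IsPolytope {d : ℕ} (P : Set (Fin d → ℝ)) : Prop :=
  ∃ s : Finset (Fin d → ℝ), P = convexHull ℝ (s : Set (Fin d → ℝ))

/-- The vectors are nonzero and pairwise linearly independent. -/
def PairwiseIndep {d n : ℕ} (a : Fin n → (Fin d → ℝ)) : Prop :=
  (∀ i, a i ≠ 0) ∧ ∀ i j, i ≠ j → ∀ c : ℝ, a j ≠ c • a i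

/-- A zonotope: a translate of a Minkowski sum of segments `[0, aᵢ]` with pairwise
linearly independent nonzero generators. -/
def IsZonotope {d : ℕ} (P : Set (Fin d → ℝ)) : Prop :=
  ∃ (n : ℕ) (a : Fin n → (Fin d → ℝ)) (x : Fin d → ℝ),
    PairwiseIndep a ∧ P = {x} + ∑ i, segment ℝ 0 (a i)

/-- Central symmetry: there is `c` with `2c - P = P`. -/
def CentSymm {d : ℕ} (P : Set (Fin d → ℝ)) : Prop :=
  ∃ c : Fin d → ℝ, (fun y => (2 : ℝ) • c - y) '' P = P

/-- An edge of the hypergraph `ℱ` on the generator set `V`: a subset `W ⊆ V` spanning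
a 2-dimensional subspace, maximal with this property. -/
def IsHEdge (V W : Finset (Fin 3 → ℝ)) : Prop :=
  W ⊆ V ∧ Module.finrank ℝ (Submodule.span ℝ (W : Set (Fin 3 → ℝ))) = 2 ∧
    ∀ v ∈ V, v ∉ W →
      Module.finrank ℝ (Submodule.span ℝ (insert v (W : Set (Fin 3 → ℝ)))) = 3

/-- The degree of `v` in the hypergraph `ℱ` on `V`: the number of edges containing `v`. -/
def degF (V : Finset (Fin 3 → ℝ)) (v : Fin 3 → ℝ) : ℕ :=
  {W : Finset (Fin 3 → ℝ) | IsHEdge V W ∧ v ∈ W}.ncard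

/-- The set of edges of the polytope `P` that are parallel to `v`: one-dimensional
exposed faces `[u,w]` of `P` with `w - u` a nonzero multiple of `v`. -/
def edgesParallel {d : ℕ} (P : Set (Fin d → ℝ)) (v : Fin d → ℝ) : Set (Set (Fin d → ℝ)) :=
  {e | ∃ u w : Fin d → ℝ, u ≠ w ∧ e = segment ℝ u w ∧
    (∃ y : Fin d → ℝ, y ≠ 0 ∧ e = {x ∈ P | ∀ p ∈ P, dotp y p ≤ dotp y x}) ∧
    ∃ c : ℝ, c ≠ 0 ∧ w - u = c • v}

/-!
At a generic height `t` the section `{z·x = t}` of the zonotope `P` has exactly one vertex for each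
edge of `P` that it crosses. The edges of `P` parallel to a generator `v` are the translates
`x + ∑ u ∈ S, u + [0, v]`, one for each sign pattern `S` of the functionals vanishing at `v`, and
each of them is crossed for a set of heights of length `|z·v|`. If `m v` denotes their number,
integration over `t` gives `A(P,z) * ∑ v, |z·v| = ∑ v, m v * |z·v|`. When `A(P,z) = λ` for generic
`z`, the functions `z ↦ |z·v|` satisfy the linear relation with coefficients `m v - λ`; these
functions have their kinks along different hyperplanes, so `m v = λ`. Finally, the functionals
vanishing at `v` form a plane, which the other generators divide into chambers by lines through the
origin, one line for each edge of `ℱ` through `v`; this makes `m v = 2 * deg v` chambers.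
-/

open Topology

section SignPatterns

variable {ι : Type*}

open Classical in
/-- The sign patterns (chambers) on `U` of a family `F` of real functions: the sets `S ⊆ U` such
that some `f ∈ F` is positive on `S` and negative on the rest of `U`. -/
def signPatterns (U : Finset ι) (F : Set (ι → ℝ)) : Finset (Finset ι) :=
  U.powerset.filter fun S ↦ ∃ f ∈ F, (∀ u ∈ S, 0 < f u) ∧ ∀ u ∈ U, u ∉ S → f u < 0

lemma mem_signPatterns {U S : Finset ι} {F : Set (ι → ℝ)} :
    S ∈ signPatterns U F ↔
      S ⊆ U ∧ ∃ f ∈ F, (∀ u ∈ S, 0 < f u) ∧ ∀ u ∈ U, u ∉ S → f u < 0 := by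
  simp only [signPatterns, Finset.mem_filter, Finset.mem_powerset]

lemma card_signPatterns_le_of_mul {U : Finset ι} {F G : Set (ι → ℝ)} {g : ι → ℝ}
    (hg : ∀ u ∈ U, g u ≠ 0) (h : ∀ f ∈ F, ∃ f' ∈ G, ∀ u ∈ U, f' u = g u * f u) :
    (signPatterns U F).card ≤ (signPatterns U G).card := by
  classical
  set N : Finset ι := {u ∈ U | g u < 0}
  refine Finset.card_le_card_of_injOn (symmDiff N) (fun S hS ↦ ?_)
    (symmDiff_right_injective N).injOn
  obtain ⟨hSU, f, hf, hpos, hneg⟩ := mem_signPatterns.1 hS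
  obtain ⟨f', hf', hmul⟩ := h f hf
  have pos_of_notMem : ∀ u ∈ U, u ∉ N → 0 < g u := fun u hu huN ↦
    (not_lt.1 fun h ↦ huN (Finset.mem_filter.2 ⟨hu, h⟩)).lt_of_ne' (hg u hu)
  refine mem_signPatterns.2 ⟨fun u hu ↦ ?_, f', hf', fun u hu ↦ ?_, fun u hu huS ↦ ?_⟩
  · rcases Finset.mem_symmDiff.1 hu with ⟨huN, -⟩ | ⟨huS, -⟩
    exacts [(Finset.mem_filter.1 huN).1, hSU huS]
  · rcases Finset.mem_symmDiff.1 hu with ⟨huN, huS⟩ | ⟨huS, huN⟩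
    · obtain ⟨huU, hgu⟩ := Finset.mem_filter.1 huN
      exact hmul u huU ▸ mul_pos_of_neg_of_neg hgu (hneg u huU huS)
    · exact hmul u (hSU huS) ▸ mul_pos (pos_of_notMem u (hSU huS) huN) (hpos u huS)
  · rw [hmul u hu]
    by_cases huN : u ∈ N
    · have : u ∈ S := by simpa only [Finset.mem_symmDiff, huN, true_and, not_not,
        not_true_eq_false, and_false, or_false] using huS
      exact mul_neg_of_neg_of_pos (Finset.mem_filter.1 huN).2 (hpos u this)
    · have : u ∉ S := by simpa only [Finset.mem_symmDiff, huN, false_and, false_or,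
        not_false_eq_true, and_true] using huS
      exact mul_neg_of_pos_of_neg (pos_of_notMem u hu huN) (hneg u hu this)

/-- The empty set is the upper cut at the maximum of `s`. -/
lemma exists_eq_filter_of_isLower {U S : Finset ι} (hU : U.Nonempty) (hSU : S ⊆ U) {s : ι → ℝ}
    (hS : ∀ u ∈ S, ∀ w ∈ U, s w ≤ s u → w ∈ S) :
    ∃ d ∈ U.image s, S = {u ∈ U | s u ≤ d} ∨ S = {u ∈ U | ¬ s u ≤ d} := by
  obtain rfl | hne := S.eq_empty_or_nonempty
  · obtain ⟨m, hm, hmax⟩ := U.exists_max_image s hU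
    exact ⟨s m, Finset.mem_image_of_mem s hm,
      Or.inr (Finset.filter_eq_empty_iff.2 fun u hu ↦ not_not.2 (hmax u hu)).symm⟩
  · obtain ⟨m, hm, hmax⟩ := S.exists_max_image s hne
    refine ⟨s m, Finset.mem_image_of_mem s (hSU hm), Or.inl ?_⟩
    ext u
    exact ⟨fun hu ↦ Finset.mem_filter.2 ⟨hSU hu, hmax u hu⟩, fun hu ↦
      hS m hm u (Finset.mem_filter.1 hu).1 (Finset.mem_filter.1 hu).2⟩

lemma card_cuts {U : Finset ι} (hU : U.Nonempty) (s : ι → ℝ) {Q : Finset (Finset ι)}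
    (hQ : ∀ S, S ∈ Q ↔ ∃ d ∈ U.image s, S = {u ∈ U | s u ≤ d} ∨ S = {u ∈ U | ¬ s u ≤ d}) :
    Q.card = 2 * (U.image s).card := by
  classical
  have hQ' : Q = (U.image s).image (fun d ↦ {u ∈ U | s u ≤ d}) ∪
      (U.image s).image (fun d ↦ {u ∈ U | ¬ s u ≤ d}) := by
    ext S
    simp only [hQ, Finset.mem_union, Finset.mem_image]
    grind
  have hinj : Set.InjOn (fun d ↦ ({u ∈ U | s u ≤ d} : Finset ι)) (U.image s) := by
    intro d hd d' hd' heq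
    obtain ⟨u, hu, rfl⟩ := Finset.mem_image.1 hd
    obtain ⟨u', hu', rfl⟩ := Finset.mem_image.1 hd'
    have hle := Finset.filter_inj'.1 heq
    exact le_antisymm ((hle hu).1 le_rfl) ((hle hu').2 le_rfl)
  have hinj' : Set.InjOn (fun d ↦ ({u ∈ U | ¬ s u ≤ d} : Finset ι)) (U.image s) := by
    intro d hd d' hd' heq
    exact hinj hd hd' (Finset.filter_inj'.2 fun u hu ↦
      not_iff_not.1 (Finset.filter_inj'.1 heq hu))
  have hdisj : Disjoint ((U.image s).image fun d ↦ ({u ∈ U | s u ≤ d} : Finset ι))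
      ((U.image s).image fun d ↦ {u ∈ U | ¬ s u ≤ d}) := by
    obtain ⟨m, hm, hmin⟩ := U.exists_min_image s hU
    rw [Finset.disjoint_left]
    intro S hS hS'
    simp only [Finset.mem_image, exists_exists_and_eq_and] at hS hS'
    obtain ⟨u, hu, rfl⟩ := hS
    obtain ⟨u', hu', heq⟩ := hS'
    exact (Finset.filter_inj'.1 heq hm).2 (hmin u hu) (hmin u' hu')
  rw [hQ', Finset.card_union_of_disjoint hdisj, Finset.card_image_of_injOn hinj,
    Finset.card_image_of_injOn hinj', two_mul]

lemma exists_gt_forall_lt_of_lt (D : Finset ℝ) (d : ℝ) : ∃ τ, d < τ ∧ ∀ x ∈ D, d < x → τ < x := by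
  have h : ∀ᶠ τ in 𝓝[>] d, ∀ x ∈ D, d < x → τ < x := by
    refine (Finset.eventually_all D).2 fun x _ ↦ ?_
    by_cases hx : d < x
    · filter_upwards [Ioo_mem_nhdsGT hx] with τ hτ _ using hτ.2
    · exact Filter.Eventually.of_forall fun τ h ↦ absurd h hx
  exact ((eventually_mem_nhdsWithin (s := Set.Ioi d)).and h).exists

lemma card_signPatterns_affine {U : Finset ι} (hU : U.Nonempty) (s : ι → ℝ) :
    (signPatterns U (Set.range fun p : ℝ × ℝ ↦ fun u ↦ p.1 - p.2 * s u)).card =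
      2 * (U.image s).card := by
  classical
  refine card_cuts hU s fun S ↦ ⟨fun hS ↦ ?_, ?_⟩
  · obtain ⟨hSU, _, ⟨⟨a, b⟩, rfl⟩, hpos, hneg⟩ := mem_signPatterns.1 hS
    rcases le_total 0 b with hb | hb
    · refine exists_eq_filter_of_isLower hU hSU fun u hu w hw hwu ↦ by_contra fun hwS ↦ ?_
      nlinarith [hpos u hu, hneg w hw hwS, mul_le_mul_of_nonneg_left hwu hb]
    · obtain ⟨d, hd, h⟩ := exists_eq_filter_of_isLower hU (Finset.sdiff_subset (s := U) (t := S))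
        (s := s) fun u hu w hw hwu ↦ by
          obtain ⟨huU, huS⟩ := Finset.mem_sdiff.1 hu
          refine Finset.mem_sdiff.2 ⟨hw, fun hwS ↦ ?_⟩
          nlinarith [hneg u huU huS, hpos w hwS, mul_le_mul_of_nonpos_left hwu hb]
      refine ⟨d, hd, ?_⟩
      rw [← Finset.sdiff_sdiff_eq_self hSU, Finset.filter_not]
      rcases h with h | h
      · exact Or.inr (by rw [h])
      · exact Or.inl (by
          rw [h, Finset.filter_not, Finset.sdiff_sdiff_eq_self (Finset.filter_subset _ _)])
  · rintro ⟨d, -, hS⟩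
    obtain ⟨τ, hdτ, hτ⟩ := exists_gt_forall_lt_of_lt (U.image s) d
    have hle : ∀ u, s u ≤ d → s u < τ := fun u hu ↦ hu.trans_lt hdτ
    have hgt : ∀ u ∈ U, ¬ s u ≤ d → τ < s u := fun u hu h ↦
      hτ _ (Finset.mem_image_of_mem s hu) (not_le.1 h)
    rcases hS with rfl | rfl
    · refine mem_signPatterns.2 ⟨Finset.filter_subset _ _, _, ⟨(τ, 1), rfl⟩, fun u hu ↦ ?_,
        fun u hu huS ↦ ?_⟩
      · simpa using hle u (Finset.mem_filter.1 hu).2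
      · simpa using hgt u hu fun h ↦ huS (Finset.mem_filter.2 ⟨hu, h⟩)
    · refine mem_signPatterns.2 ⟨Finset.filter_subset _ _, _, ⟨(-τ, -1), rfl⟩, fun u hu ↦ ?_,
        fun u hu huS ↦ ?_⟩
      · simpa using hgt u (Finset.mem_filter.1 hu).1 (Finset.mem_filter.1 hu).2
      · simpa using hle u (not_not.1 fun h ↦ huS (Finset.mem_filter.2 ⟨hu, h⟩))

end SignPatterns

section Edges

variable {E : Type*} [AddCommGroup E] [Module ℝ E] [DecidableEq E]

/-- The sets of generators other than `v` on which a functional vanishing at `v` can be positive,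
while negative at the remaining ones. They index the edges parallel to `v` of a zonotope with
generator set `V`: the edge belonging to `S` is a translate of `∑ u ∈ S, u + [0, v]`. -/
def edgePatterns (V : Finset E) (v : E) : Finset (Finset E) :=
  signPatterns (V.erase v) ((⇑) '' {φ : Module.Dual ℝ E | φ v = 0})

lemma mem_edgePatterns {V S : Finset E} {v : E} :
    S ∈ edgePatterns V v ↔ S ⊆ V.erase v ∧ ∃ φ : Module.Dual ℝ E, φ v = 0 ∧
      (∀ u ∈ S, 0 < φ u) ∧ ∀ u ∈ V.erase v, u ∉ S → φ u < 0 := by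
  simp only [edgePatterns, mem_signPatterns, Set.exists_mem_image, Set.mem_ofPred_eq]

omit [DecidableEq E] in
lemma exists_dual_eq_zero_forall_ne_zero {U : Finset E} {v : E}
    (hU : ∀ u ∈ U, LinearIndependent ℝ ![v, u]) :
    ∃ φ : Module.Dual ℝ E, φ v = 0 ∧ ∀ u ∈ U, φ u ≠ 0 := by
  have hsep : ∀ u : U, ∃ φ ∈ (ℝ ∙ v).dualAnnihilator, Module.Dual.eval ℝ E u φ ≠ 0 := by
    rintro ⟨u, hu⟩
    have huv : u ∉ ℝ ∙ v := fun h ↦ by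
      obtain ⟨c, hc⟩ := Submodule.mem_span_singleton.1 h
      exact (LinearIndependent.pair_iff' ((hU u hu).ne_zero 0)).1 (hU u hu) c hc
    obtain ⟨φ, hφu, hφ⟩ := Submodule.exists_le_ker_of_notMem huv
    exact ⟨φ, (Submodule.mem_dualAnnihilator φ).2 fun w hw ↦ hφ hw, hφu⟩
  obtain ⟨φ, hφ, hφU⟩ := Module.Dual.exists_forall_mem_ne_zero_of_forall_exists _ _ hsep
  exact ⟨φ, (Submodule.mem_dualAnnihilator φ).1 hφ v (Submodule.mem_span_singleton_self v),
    fun u hu ↦ hφU ⟨u, hu⟩⟩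

omit [DecidableEq E] in
/-- In dimension three, a functional vanishing at `v` completes to coordinates on `E / ℝ v`. -/
lemma exists_dual_complement (hE : Module.finrank ℝ E = 3) {v : E} {φ : Module.Dual ℝ E}
    (hφ : φ ≠ 0) (hv : v ≠ 0) (hφv : φ v = 0) :
    ∃ ψ : Module.Dual ℝ E, LinearMap.ker φ ⊓ LinearMap.ker ψ = ℝ ∙ v := by
  have : FiniteDimensional ℝ E := Module.finite_of_finrank_eq_succ hE
  have hker : Module.finrank ℝ (LinearMap.ker φ) = 2 := by
    have := Module.Dual.finrank_ker_add_one_of_ne_zero hφ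
    omega
  have hlt : ℝ ∙ v < LinearMap.ker φ := by
    refine lt_of_le_of_ne ((Submodule.span_singleton_le_iff_mem _ _).2 hφv) fun h ↦ ?_
    rw [← h, finrank_span_singleton hv] at hker
    omega
  obtain ⟨w, hw, hwv⟩ := SetLike.exists_of_lt hlt
  obtain ⟨ψ, hψw, hψ⟩ := Submodule.exists_le_ker_of_notMem hwv
  refine ⟨ψ, (Submodule.eq_of_le_of_finrank_le (le_inf hlt.le hψ) ?_).symm⟩
  have hlt' : LinearMap.ker φ ⊓ LinearMap.ker ψ < LinearMap.ker φ :=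
    lt_of_le_of_ne inf_le_left fun h ↦ hψw (inf_eq_left.1 h hw)
  have := Submodule.finrank_lt_finrank_of_lt hlt'
  rw [finrank_span_singleton hv]
  omega

omit [DecidableEq E] in
lemma mem_span_pair_iff_slope_eq {v u w : E} {φ ψ : Module.Dual ℝ E}
    (hker : LinearMap.ker φ ⊓ LinearMap.ker ψ = ℝ ∙ v) (hu : φ u ≠ 0) (hw : φ w ≠ 0) :
    w ∈ Submodule.span ℝ {v, u} ↔ ψ w / φ w = ψ u / φ u := by
  obtain ⟨hφv, hψv⟩ : φ v = 0 ∧ ψ v = 0 := by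
    have h : v ∈ LinearMap.ker φ ⊓ LinearMap.ker ψ := hker ▸ Submodule.mem_span_singleton_self v
    exact h
  rw [div_eq_div_iff hw hu, Submodule.mem_span_pair]
  constructor
  · rintro ⟨a, b, rfl⟩
    simp only [map_add, map_smul, hφv, hψv, smul_eq_mul]
    ring
  · intro h
    have hmem : w - (φ w / φ u) • u ∈ ℝ ∙ v := by
      rw [← hker]
      refine ⟨?_, ?_⟩
      · simp [hu]
      · simp only [SetLike.mem_coe, LinearMap.mem_ker, map_sub, map_smul, smul_eq_mul]
        field_simp
        linarith
    obtain ⟨a, ha⟩ := Submodule.mem_span_singleton.1 hmem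
    exact ⟨a, φ w / φ u, by rw [ha, sub_add_cancel]⟩

omit [DecidableEq E] in
lemma exists_smul_add_smul_eq_of_inf_ker_le {φ ψ f : Module.Dual ℝ E}
    (h : LinearMap.ker φ ⊓ LinearMap.ker ψ ≤ LinearMap.ker f) : ∃ a b : ℝ, a • φ + b • ψ = f := by
  have hf : f ∈ Submodule.span ℝ (Set.range ![φ, ψ]) :=
    mem_span_of_iInf_ker_le_ker fun w hw ↦ by
      rw [Submodule.mem_iInf] at hw
      exact h ⟨hw 0, hw 1⟩
  rwa [Matrix.range_cons_cons_empty, Submodule.mem_span_pair] at hf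

lemma card_edgePatterns_eq_slopes {V : Finset E} {v : E} (hV : (V.erase v).Nonempty)
    {φ ψ : Module.Dual ℝ E} (hφ : ∀ u ∈ V.erase v, φ u ≠ 0)
    (hker : LinearMap.ker φ ⊓ LinearMap.ker ψ = ℝ ∙ v) :
    (edgePatterns V v).card = 2 * ((V.erase v).image fun u ↦ ψ u / φ u).card := by
  have hv : v ∈ LinearMap.ker φ ⊓ LinearMap.ker ψ := hker ▸ Submodule.mem_span_singleton_self v
  rw [← card_signPatterns_affine hV]
  refine le_antisymm (card_signPatterns_le_of_mul (g := fun u ↦ (φ u)⁻¹)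
    (fun u hu ↦ inv_ne_zero (hφ u hu)) ?_) (card_signPatterns_le_of_mul hφ ?_)
  · rintro _ ⟨f, hf, rfl⟩
    obtain ⟨a, b, rfl⟩ := exists_smul_add_smul_eq_of_inf_ker_le
      (hker.le.trans ((Submodule.span_singleton_le_iff_mem _ (LinearMap.ker f)).2 hf))
    refine ⟨_, ⟨(a, -b), rfl⟩, fun u hu ↦ ?_⟩
    have := hφ u hu
    simp only [LinearMap.add_apply, LinearMap.smul_apply, smul_eq_mul]
    field_simp
    ring
  · rintro _ ⟨⟨a, b⟩, rfl⟩
    refine ⟨_, ⟨a • φ - b • ψ, ?_, rfl⟩, fun u hu ↦ ?_⟩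
    · simp [LinearMap.mem_ker.1 hv.1, LinearMap.mem_ker.1 hv.2]
    · have := hφ u hu
      simp only [LinearMap.sub_apply, LinearMap.smul_apply, smul_eq_mul]
      field_simp

end Edges

section Degree

variable {V W : Finset (Fin 3 → ℝ)} {v : Fin 3 → ℝ}

open Classical in
lemma isHEdge_iff : IsHEdge V W ↔
    Module.finrank ℝ (Submodule.span ℝ (W : Set (Fin 3 → ℝ))) = 2 ∧
      W = V.filter (· ∈ Submodule.span ℝ (W : Set (Fin 3 → ℝ))) := by
  constructor
  · rintro ⟨hWV, h2, h3⟩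
    refine ⟨h2, Finset.Subset.antisymm (fun w hw ↦ Finset.mem_filter.2
      ⟨hWV hw, Submodule.subset_span hw⟩) fun w hw ↦ by_contra fun hwW ↦ ?_⟩
    obtain ⟨hwV, hws⟩ := Finset.mem_filter.1 hw
    have := h3 w hwV hwW
    rw [Submodule.span_insert_eq_span hws] at this
    omega
  · rintro ⟨h2, hW⟩
    refine ⟨fun w hw ↦ (Finset.mem_filter.1 (hW ▸ hw)).1, h2, fun w hwV hwW ↦ ?_⟩
    have hws : w ∉ Submodule.span ℝ (W : Set (Fin 3 → ℝ)) := fun h ↦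
      hwW (hW ▸ Finset.mem_filter.2 ⟨hwV, h⟩)
    have hlt : Submodule.span ℝ (W : Set (Fin 3 → ℝ)) <
        Submodule.span ℝ (insert w (W : Set (Fin 3 → ℝ))) :=
      SetLike.lt_iff_le_and_exists.2 ⟨Submodule.span_mono (Set.subset_insert _ _), w,
        Submodule.subset_span (Set.mem_insert _ _), hws⟩
    have hle := Submodule.finrank_le (Submodule.span ℝ (insert w (W : Set (Fin 3 → ℝ))))
    rw [Module.finrank_fin_fun] at hle
    have := Submodule.finrank_lt_finrank_of_lt hlt
    omega

open Classical in
lemma isHEdge_and_mem_iff (hv : v ∈ V) (hV : ∀ u ∈ V.erase v, LinearIndependent ℝ ![v, u]) :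
    IsHEdge V W ∧ v ∈ W ↔
      ∃ u ∈ V.erase v, W = V.filter (· ∈ Submodule.span ℝ {v, u}) := by
  have hrank : ∀ u ∈ V.erase v, Module.finrank ℝ (Submodule.span ℝ {v, u}) = 2 := fun u hu ↦ by
    rw [← Matrix.range_cons_cons_empty v u ![], finrank_span_eq_card (hV u hu), Fintype.card_fin]
  constructor
  · rintro ⟨hW, hvW⟩
    obtain ⟨h2, hWV⟩ := isHEdge_iff.1 hW
    obtain ⟨u, huW, huv⟩ : ∃ u ∈ W, u ≠ v := by
      by_contra! h
      have hle := finrank_span_le_card (R := ℝ) (W : Set (Fin 3 → ℝ))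
      rw [Finset.toFinset_coe, h2] at hle
      have := Finset.card_le_one_iff_subset_singleton.2 ⟨v, fun w hw ↦
        Finset.mem_singleton.2 (h w hw)⟩
      omega
    have hu : u ∈ V.erase v := Finset.mem_erase.2 ⟨huv, hW.1 huW⟩
    have hspan : Submodule.span ℝ {v, u} = Submodule.span ℝ (W : Set (Fin 3 → ℝ)) :=
      Submodule.eq_of_le_of_finrank_eq
        (Submodule.span_mono (Set.pair_subset hvW huW)) (by rw [hrank u hu, h2])
    exact ⟨u, hu, hspan ▸ hWV⟩
  · rintro ⟨u, hu, rfl⟩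
    set W := V.filter (· ∈ Submodule.span ℝ {v, u})
    have hvW : v ∈ W := Finset.mem_filter.2 ⟨hv, Submodule.subset_span (Set.mem_insert _ _)⟩
    have huW : u ∈ W := Finset.mem_filter.2 ⟨Finset.mem_of_mem_erase hu,
      Submodule.subset_span (Set.mem_insert_of_mem _ rfl)⟩
    have hspan : Submodule.span ℝ (W : Set (Fin 3 → ℝ)) = Submodule.span ℝ {v, u} :=
      le_antisymm (Submodule.span_le.2 fun w hw ↦ (Finset.mem_filter.1 hw).2)
        (Submodule.span_mono (Set.pair_subset hvW huW))
    exact ⟨isHEdge_iff.2 ⟨hspan ▸ hrank u hu, by rw [hspan]⟩, hvW⟩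

/-- The edges through `v` are the fibres of the slope `s`, completed by `v`. -/
lemma degF_eq_card_image (hv : v ∈ V) (hV : ∀ u ∈ V.erase v, LinearIndependent ℝ ![v, u])
    {s : (Fin 3 → ℝ) → ℝ} (hs : ∀ u ∈ V.erase v, ∀ w ∈ V.erase v,
      w ∈ Submodule.span ℝ {v, u} ↔ s w = s u) :
    degF V v = ((V.erase v).image s).card := by
  classical
  have hfib : ∀ u ∈ V.erase v, V.filter (· ∈ Submodule.span ℝ {v, u}) =
      insert v ((V.erase v).filter (s · = s u)) := by
    intro u hu
    ext w
    by_cases hw : w = v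
    · simp [hw, hv, Submodule.mem_span_of_mem]
    · simp only [Finset.mem_filter, Finset.mem_insert, hw, false_or, Finset.mem_erase, ne_eq,
        not_false_eq_true, true_and]
      exact and_congr_right fun hwV ↦ hs u hu w (Finset.mem_erase.2 ⟨hw, hwV⟩)
  have hset : {W | IsHEdge V W ∧ v ∈ W} =
      (fun d ↦ insert v ((V.erase v).filter (s · = d))) '' ((V.erase v).image s : Set ℝ) := by
    ext W
    simp only [Set.mem_ofPred_eq, isHEdge_and_mem_iff hv hV, Finset.coe_image, Set.image_image,
      Set.mem_image, Finset.mem_coe]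
    exact exists_congr fun u ↦ and_congr_right fun hu ↦ by rw [hfib u hu, eq_comm]
  rw [degF, hset, Set.InjOn.ncard_image, Set.ncard_coe_finset]
  intro d hd d' _ heq
  obtain ⟨u, hu, rfl⟩ := Finset.mem_image.1 hd
  have : u ∈ insert v ((V.erase v).filter (s · = d')) :=
    heq.subset (Finset.mem_insert_of_mem (Finset.mem_filter.2 ⟨hu, rfl⟩))
  exact (Finset.mem_filter.1 (Finset.mem_of_mem_insert_of_ne this (Finset.ne_of_mem_erase hu))).2

theorem card_edgePatterns (hv : v ∈ V) (hV : ∀ u ∈ V.erase v, LinearIndependent ℝ ![v, u])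
    (hne : (V.erase v).Nonempty) : (edgePatterns V v).card = 2 * degF V v := by
  obtain ⟨u₀, hu₀⟩ := hne
  obtain ⟨φ, hφv, hφ⟩ := exists_dual_eq_zero_forall_ne_zero hV
  have hφ0 : φ ≠ 0 := fun h ↦ hφ u₀ hu₀ (by rw [h, LinearMap.zero_apply])
  obtain ⟨ψ, hker⟩ := exists_dual_complement (Module.finrank_fin_fun ℝ) hφ0
    ((hV u₀ hu₀).ne_zero 0) hφv
  rw [card_edgePatterns_eq_slopes ⟨u₀, hu₀⟩ hφ hker, degF_eq_card_image hv hV fun u hu w hw ↦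
    mem_span_pair_iff_slope_eq hker (hφ u hu) (hφ w hw)]

end Degree

section Gordan

lemma eq_zero_of_forall_lt_map {E : Type*} [AddCommGroup E] [Module ℝ E] {K : Submodule ℝ E}
    {f : Module.Dual ℝ E} {r : ℝ} (h : ∀ y ∈ K, r < f y) {y : E} (hy : y ∈ K) : f y = 0 := by
  by_contra hfy
  have := h _ (K.smul_mem ((r - 1) / f y) hy)
  rw [map_smul, smul_eq_mul, div_mul_cancel₀ _ hfy] at this
  linarith

variable {E : Type*} [AddCommGroup E] [Module ℝ E] [TopologicalSpace E] [IsTopologicalAddGroup E]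
  [ContinuousSMul ℝ E]

/-- Gordan's theorem of the alternative, relative to a closed subspace `K`. -/
lemma exists_dual_pos_or_exists_sum_mem [LocallyConvexSpace ℝ E] {K : Submodule ℝ E}
    (hK : IsClosed (K : Set E)) {ι : Type*} (W : Finset ι) (τ : ι → E) :
    (∃ f : StrongDual ℝ E, (∀ y ∈ K, f y = 0) ∧ ∀ i ∈ W, 0 < f (τ i)) ∨
      ∃ a : ι → ℝ, (∀ i ∈ W, 0 ≤ a i) ∧ (∃ i ∈ W, 0 < a i) ∧ ∑ i ∈ W, a i • τ i ∈ K := by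
  classical
  let T : (W → ℝ) →ₗ[ℝ] E := Fintype.linearCombination ℝ fun i ↦ τ i
  have hT : Continuous T := LinearMap.continuous_of_finiteDimensional T
  by_cases hdisj : Disjoint (T '' stdSimplex ℝ W) (K : Set E)
  · obtain ⟨f, r, r', hlt, hr, hgt⟩ := geometric_hahn_banach_compact_closed
      ((convex_stdSimplex ℝ W).linear_image T) ((isCompact_stdSimplex ℝ W).image hT)
      K.convex hK hdisj
    have hf0 : ∀ y ∈ K, f y = 0 := fun y hy ↦
      eq_zero_of_forall_lt_map (f := f.toLinearMap) hgt hy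
    have hr' : r' < 0 := by simpa only [map_zero] using hgt 0 K.zero_mem
    refine Or.inl ⟨-f, fun y hy ↦ by simp [hf0 y hy], fun i hi ↦ ?_⟩
    have hTi : T (Pi.single ⟨i, hi⟩ 1) = τ i := by simp [T]
    have := hlt _ ⟨_, single_mem_stdSimplex ℝ ⟨i, hi⟩, hTi⟩
    rw [neg_apply]
    linarith
  · obtain ⟨_, ⟨a, ha, rfl⟩, hmem⟩ := Set.not_disjoint_iff.1 hdisj
    obtain ⟨i, hi⟩ : ∃ i, 0 < a i := by
      by_contra! h
      linarith [ha.2, Finset.sum_nonpos fun i (_ : i ∈ Finset.univ) ↦ h i]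
    have hext : ∀ i : W, Function.extend Subtype.val a 0 i = a i :=
      Subtype.val_injective.extend_apply a 0
    refine Or.inr ⟨Function.extend Subtype.val a 0, fun i hi ↦ ?_, ⟨i, i.2, ?_⟩, ?_⟩
    · exact (hext ⟨i, hi⟩).symm ▸ ha.1 _
    · rwa [hext]
    · rw [← Finset.sum_coe_sort]
      simpa only [hext, T, Fintype.linearCombination_apply, SetLike.mem_coe] using hmem

end Gordan

section Perturbation

lemma eventually_add_mul_pos {c h : ℝ} (hc : 0 ≤ c) (h0 : c = 0 → 0 < h) :
    ∀ᶠ ε in 𝓝[>] (0 : ℝ), 0 < c + ε * h := by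
  rcases hc.eq_or_lt' with rfl | hc
  · filter_upwards [self_mem_nhdsWithin] with ε hε
    simpa only [zero_add] using mul_pos hε (h0 rfl)
  · have : Filter.Tendsto (fun ε : ℝ ↦ c + ε * h) (𝓝 0) (𝓝 (c + 0 * h)) :=
      (by fun_prop : Continuous fun ε : ℝ ↦ c + ε * h).tendsto 0
    exact nhdsWithin_le_nhds (this.eventually_const_lt (by simpa using hc))

lemma eventually_add_mul_mem_Ioo {c h : ℝ} (hc : c ∈ Set.Icc 0 1) (h0 : c = 0 → 0 < h)
    (h1 : c = 1 → h < 0) : ∀ᶠ ε in 𝓝[>] (0 : ℝ), c + ε * h ∈ Set.Ioo 0 1 := by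
  filter_upwards [eventually_add_mul_pos hc.1 h0, eventually_add_mul_pos (c := 1 - c) (h := -h)
    (sub_nonneg.2 hc.2) fun hc1 ↦ neg_pos.2 (h1 (by linarith))] with ε hε hε'
  exact ⟨hε, by linarith⟩

lemma eventually_add_mul_mem_Icc {c h : ℝ} (hc : c ∈ Set.Icc 0 1) (h0 : c = 0 → 0 ≤ h)
    (h1 : c = 1 → h ≤ 0) : ∀ᶠ ε in 𝓝[>] (0 : ℝ), c + ε * h ∈ Set.Icc 0 1 := by
  by_cases hh : h = 0
  · exact Filter.Eventually.of_forall fun ε ↦ by simpa only [hh, mul_zero, add_zero] using hc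
  · exact (eventually_add_mul_mem_Ioo hc (fun h ↦ (h0 h).lt_of_ne' hh)
      fun h ↦ (h1 h).lt_of_ne hh).mono fun ε hε ↦ Set.Ioo_subset_Icc_self hε

end Perturbation

section EdgeCoeff

variable {ι : Type*} [DecidableEq ι]

/-- The coefficients of a point on the edge of the zonotope that is parallel to `v` and belongs to
the pattern `S`. -/
def edgeCoeff (S : Finset ι) (v : ι) (k : ℝ) : ι → ℝ :=
  Function.update (fun u ↦ if u ∈ S then 1 else 0) v k

lemma edgeCoeff_mem_Icc {S : Finset ι} {v : ι} {k : ℝ} (hk : k ∈ Set.Icc 0 1) (u : ι) :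
    edgeCoeff S v k u ∈ Set.Icc 0 1 := by
  by_cases hu : u = v
  · simpa [edgeCoeff, hu] using hk
  · by_cases huS : u ∈ S <;> simp [edgeCoeff, hu, huS]

lemma eq_and_eq_of_edgeCoeff_eq {V S S' : Finset ι} {v v' : ι} {k k' : ℝ} (hv : v ∈ V)
    (hS : S ⊆ V.erase v) (hS' : S' ⊆ V.erase v') (hk : k ∈ Set.Ioo 0 1)
    (h : ∀ u ∈ V, edgeCoeff S v k u = edgeCoeff S' v' k' u) : v = v' ∧ S = S' := by
  obtain rfl : v = v' := by
    by_contra hne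
    have hkv := h v hv
    rw [edgeCoeff, Function.update_self, edgeCoeff, Function.update_of_ne hne] at hkv
    split_ifs at hkv
    exacts [hk.2.ne hkv, hk.1.ne' hkv]
  refine ⟨rfl, Finset.ext fun u ↦ ?_⟩
  by_cases hu : u ∈ V.erase v
  · have huS := h u (Finset.mem_of_mem_erase hu)
    simp only [edgeCoeff, Function.update_of_ne (Finset.ne_of_mem_erase hu)] at huS
    split_ifs at huS <;> simp_all
  · exact iff_of_false (fun h ↦ hu (hS h)) fun h ↦ hu (hS' h)

end EdgeCoeff

section Zonotope

variable {E : Type*} [AddCommGroup E] [Module ℝ E]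

/-- The zonotope `x + ∑ v ∈ V, [0, v]`. -/
def zonotope (V : Finset E) (x : E) : Set E := {x} + ∑ v ∈ V, segment ℝ 0 v

/-- The point `x + ∑ v ∈ V, c v • v`; it lies in `zonotope V x` when the coefficients `c` are in
`[0, 1]`. -/
def zonotopePoint (V : Finset E) (x : E) (c : E → ℝ) : E := x + ∑ v ∈ V, c v • v

variable {V : Finset E} {x : E} {c : E → ℝ}

lemma mem_zonotope_iff {y : E} :
    y ∈ zonotope V x ↔ ∃ c : E → ℝ, (∀ v ∈ V, c v ∈ Set.Icc 0 1) ∧ zonotopePoint V x c = y := by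
  simp only [zonotope, Set.singleton_add, Set.mem_image, Set.mem_finsetSum, segment_eq_image,
    smul_zero, zero_add]
  constructor
  · rintro ⟨_, ⟨g, hg, rfl⟩, rfl⟩
    choose! c hc hcg using fun v (hv : v ∈ V) ↦ hg hv
    exact ⟨c, hc, by rw [zonotopePoint, Finset.sum_congr rfl hcg]⟩
  · rintro ⟨c, hc, rfl⟩
    exact ⟨_, ⟨fun v ↦ c v • v, fun hv ↦ ⟨c _, hc _ hv, rfl⟩, rfl⟩, rfl⟩

lemma zonotopePoint_mem (hc : ∀ v ∈ V, c v ∈ Set.Icc 0 1) : zonotopePoint V x c ∈ zonotope V x :=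
  mem_zonotope_iff.2 ⟨c, hc, rfl⟩

lemma zonotopePoint_add_smul (h : E → ℝ) (ε : ℝ) :
    zonotopePoint V x (c + ε • h) = zonotopePoint V x c + ε • ∑ v ∈ V, h v • v := by
  simp only [zonotopePoint, Pi.add_apply, Pi.smul_apply, smul_eq_mul, add_smul, mul_smul,
    Finset.sum_add_distrib, Finset.smul_sum, add_assoc]

lemma map_zonotopePoint (φ : Module.Dual ℝ E) :
    φ (zonotopePoint V x c) = φ x + ∑ v ∈ V, c v * φ v := by
  simp only [zonotopePoint, map_add, map_sum, map_smul, smul_eq_mul]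

/-- Otherwise the point is the midpoint of two points `c ± ε • h` of the section. -/
lemma sum_smul_eq_zero_of_mem_extremePoints {L : Module.Dual ℝ E} {t : ℝ}
    (hc : ∀ v ∈ V, c v ∈ Set.Icc 0 1)
    (hp : zonotopePoint V x c ∈ Set.extremePoints ℝ (zonotope V x ∩ {y | L y = t})) {h : E → ℝ}
    (hh : ∀ v ∈ V, h v ≠ 0 → c v ∈ Set.Ioo 0 1) (hL : L (∑ v ∈ V, h v • v) = 0) :
    ∑ v ∈ V, h v • v = 0 := by
  have hev : ∀ g : E → ℝ, (∀ v ∈ V, g v ≠ 0 → c v ∈ Set.Ioo 0 1) →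
      ∀ᶠ ε in 𝓝[>] (0 : ℝ), ∀ v ∈ V, (c + ε • g) v ∈ Set.Icc 0 1 := fun g hg ↦ by
    refine (Finset.eventually_all V).2 fun v hv ↦ eventually_add_mul_mem_Icc (hc v hv) ?_ ?_
    · exact fun h0 ↦ (by_contra fun hne ↦ (hg v hv fun h ↦ hne h.ge).1.ne' h0)
    · exact fun h1 ↦ (by_contra fun hne ↦ (hg v hv fun h ↦ hne h.le).2.ne h1)
  obtain ⟨ε, hε, hpos, hneg⟩ := ((eventually_mem_nhdsWithin (s := Set.Ioi (0 : ℝ))).and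
    ((hev h hh).and (hev (-h) fun v hv hv0 ↦ hh v hv (neg_ne_zero.1 hv0)))).exists
  have hmem : ∀ g : E → ℝ, (∀ v ∈ V, (c + ε • g) v ∈ Set.Icc 0 1) → L (∑ v ∈ V, g v • v) = 0 →
      zonotopePoint V x c + ε • ∑ v ∈ V, g v • v ∈ zonotope V x ∩ {y | L y = t} := by
    refine fun g hg hLg ↦ ⟨?_, ?_⟩
    · rw [← zonotopePoint_add_smul]
      exact zonotopePoint_mem hg
    · have : L (zonotopePoint V x c) = t := hp.1.2
      simp only [Set.mem_ofPred_eq, map_add, map_smul, hLg, this, smul_zero, add_zero]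
  have hsum : ∑ v ∈ V, (-h) v • v = -∑ v ∈ V, h v • v := by
    simp only [Pi.neg_apply, neg_smul, Finset.sum_neg_distrib]
  have hseg : zonotopePoint V x c ∈ openSegment ℝ (zonotopePoint V x c + ε • ∑ v ∈ V, h v • v)
      (zonotopePoint V x c + ε • ∑ v ∈ V, (-h) v • v) :=
    ⟨1 / 2, 1 / 2, by norm_num, by norm_num, by norm_num, by rw [hsum]; module⟩
  have hzero := hp.2 (hmem h hpos hL) (hmem (-h) hneg (by rw [hsum, map_neg, hL, neg_zero])) hseg
  simpa only [add_eq_left, smul_eq_zero, (Set.mem_Ioi.1 hε).ne', false_or] using hzero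

lemma notMem_extremePoints_of_mem_Ioo {L : Module.Dual ℝ E} {t : ℝ} {u w : E} (hu : u ∈ V)
    (hw : w ∈ V) (huw : LinearIndependent ℝ ![u, w]) (hLu : L u ≠ 0)
    (hc : ∀ v ∈ V, c v ∈ Set.Icc 0 1) (hcu : c u ∈ Set.Ioo 0 1) (hcw : c w ∈ Set.Ioo 0 1) :
    zonotopePoint V x c ∉ Set.extremePoints ℝ (zonotope V x ∩ {y | L y = t}) := by
  classical
  intro hp
  set h : E → ℝ := Pi.single u (L w) - Pi.single w (L u)
  have hsum : ∑ v ∈ V, h v • v = L w • u - L u • w := by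
    simp only [h, Pi.sub_apply, Pi.single_apply, sub_smul, ite_smul, zero_smul,
      Finset.sum_sub_distrib, Finset.sum_ite_eq', hu, hw, if_true]
  have hfrac : ∀ v ∈ V, h v ≠ 0 → c v ∈ Set.Ioo 0 1 := by
    intro v _ hv
    by_cases hvu : v = u
    · exact hvu ▸ hcu
    by_cases hvw : v = w
    · exact hvw ▸ hcw
    · exact absurd (by simp [h, hvu, hvw]) hv
  have hzero := sum_smul_eq_zero_of_mem_extremePoints hc hp hfrac
    (by rw [hsum, map_sub, map_smul, map_smul, smul_eq_mul, smul_eq_mul, mul_comm, sub_self])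
  rw [hsum, sub_eq_add_neg, ← neg_smul] at hzero
  exact hLu (neg_eq_zero.1 (LinearIndependent.pair_iff.1 huw _ _ hzero).2)

/-- Otherwise `c + ε • h` would represent the same point with a second fractional coefficient. -/
lemma sum_smul_ne_zero_of_mem_extremePoints {L : Module.Dual ℝ E} {t : ℝ} {h : E → ℝ} {v w : E}
    (hv : v ∈ V) (hw : w ∈ V) (hvw : LinearIndependent ℝ ![v, w]) (hLv : L v ≠ 0)
    (hc : ∀ u ∈ V, c u ∈ Set.Icc 0 1) (hcv : c v ∈ Set.Ioo 0 1)
    (hp : zonotopePoint V x c ∈ Set.extremePoints ℝ (zonotope V x ∩ {y | L y = t}))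
    (h0 : ∀ u ∈ V, c u = 0 → 0 ≤ h u) (h1 : ∀ u ∈ V, c u = 1 → h u ≤ 0)
    (hw0 : c w = 0 → 0 < h w) (hw1 : c w = 1 → h w < 0) : ∑ u ∈ V, h u • u ≠ 0 := by
  intro hzero
  have hIcc : ∀ᶠ ε in 𝓝[>] (0 : ℝ), ∀ u ∈ V, c u + ε * h u ∈ Set.Icc 0 1 :=
    (Finset.eventually_all V).2 fun u hu ↦ eventually_add_mul_mem_Icc (hc u hu) (h0 u hu) (h1 u hu)
  obtain ⟨ε, hεV, hεv, hεw⟩ := (hIcc.and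
    ((eventually_add_mul_mem_Ioo (hc v hv) (fun h ↦ absurd h hcv.1.ne')
      (fun h ↦ absurd h hcv.2.ne)).and (eventually_add_mul_mem_Ioo (hc w hw) hw0 hw1))).exists
  refine notMem_extremePoints_of_mem_Ioo (t := t) (x := x) (c := c + ε • h) hv hw hvw hLv hεV
    hεv hεw ?_
  rwa [zonotopePoint_add_smul, hzero, smul_zero, add_zero]

lemma exists_coeff_mem_Ioo {L : Module.Dual ℝ E} (hc : ∀ u ∈ V, c u ∈ Set.Icc 0 1)
    (hgen : ∀ S ⊆ V, L (x + ∑ u ∈ S, u) ≠ L (zonotopePoint V x c)) :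
    ∃ v ∈ V, c v ∈ Set.Ioo 0 1 := by
  by_contra! h
  refine hgen (V.filter (c · = 1)) (Finset.filter_subset _ _) (congrArg (fun y ↦ L (x + y)) ?_)
  rw [Finset.sum_filter]
  refine Finset.sum_congr rfl fun u hu ↦ ?_
  split_ifs with hu1
  · rw [hu1, one_smul]
  · have hu0 : c u = 0 := by_contra fun hu0 ↦
      h u hu ⟨(hc u hu).1.lt_of_ne' hu0, (hc u hu).2.lt_of_ne hu1⟩
    rw [hu0, zero_smul]

lemma isGreatest_image_zonotope (L : Module.Dual ℝ E) :
    IsGreatest (L '' zonotope V x) (L x + ∑ u ∈ V, max 0 (L u)) := by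
  constructor
  · refine ⟨zonotopePoint V x fun u ↦ if 0 < L u then 1 else 0, zonotopePoint_mem fun u _ ↦ ?_, ?_⟩
    · split_ifs <;> simp
    · refine (map_zonotopePoint L).trans (congrArg (L x + ·) (Finset.sum_congr rfl fun u _ ↦ ?_))
      split_ifs with h
      · rw [one_mul, max_eq_right h.le]
      · rw [zero_mul, max_eq_left (not_lt.1 h)]
  · rintro _ ⟨y, hy, rfl⟩
    obtain ⟨c, hc, rfl⟩ := mem_zonotope_iff.1 hy
    rw [map_zonotopePoint]
    gcongr with u hu
    exact (mul_le_mul_of_nonneg_left (le_max_right _ _) (hc u hu).1).trans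
      (mul_le_of_le_one_left (le_max_left _ _) (hc u hu).2)

lemma isLeast_image_zonotope (L : Module.Dual ℝ E) :
    IsLeast (L '' zonotope V x) (L x + ∑ u ∈ V, min 0 (L u)) := by
  obtain ⟨⟨y, hy, hyL⟩, hub⟩ := isGreatest_image_zonotope (V := V) (x := x) (-L)
  have hval : L x + ∑ u ∈ V, min 0 (L u) = -((-L) x + ∑ u ∈ V, max 0 ((-L) u)) := by
    simp only [LinearMap.neg_apply, neg_add, neg_neg, ← Finset.sum_neg_distrib, ← min_neg_neg,
      neg_zero]
  rw [hval]
  exact ⟨⟨y, hy, by rw [← hyL, LinearMap.neg_apply, neg_neg]⟩,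
    Set.forall_mem_image.2 fun w hw ↦ neg_le.1 (hub (Set.mem_image_of_mem _ hw))⟩

variable [DecidableEq E]

lemma zonotopePoint_edgeCoeff {S : Finset E} {v : E} (hv : v ∈ V) (hS : S ⊆ V.erase v) (k : ℝ) :
    zonotopePoint V x (edgeCoeff S v k) = x + ∑ u ∈ S, u + k • v := by
  have hsum : ∑ u ∈ V.erase v, edgeCoeff S v k u • u = ∑ u ∈ S, u := by
    rw [← Finset.sum_subset hS (f := fun u ↦ edgeCoeff S v k u • u) fun u hu huS ↦ by
      simp [edgeCoeff, Finset.ne_of_mem_erase hu, huS]]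
    exact Finset.sum_congr rfl fun u hu ↦ by
      simp [edgeCoeff, Finset.ne_of_mem_erase (hS hu), hu]
  rw [zonotopePoint, ← Finset.sum_erase_add V _ hv, hsum, edgeCoeff, Function.update_self,
    add_assoc]

/-- The functional `φ` of the pattern `S` is maximal over the zonotope exactly along the edge, and
on the edge the height `L` determines the point. -/
lemma eq_edgeCoeff_of_le {L φ : Module.Dual ℝ E} {S : Finset E} {v : E} {k : ℝ} (hv : v ∈ V)
    (hLv : L v ≠ 0) (hφv : φ v = 0) (hpos : ∀ u ∈ S, 0 < φ u)
    (hneg : ∀ u ∈ V.erase v, u ∉ S → φ u < 0) (hc : ∀ u ∈ V, c u ∈ Set.Icc 0 1)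
    (hφ : φ (zonotopePoint V x (edgeCoeff S v k)) ≤ φ (zonotopePoint V x c))
    (hL : L (zonotopePoint V x c) = L (zonotopePoint V x (edgeCoeff S v k))) :
    ∀ u ∈ V, c u = edgeCoeff S v k u := by
  simp only [map_zonotopePoint, add_le_add_iff_left, add_right_inj] at hφ hL
  have hle : ∀ u ∈ V, c u * φ u ≤ edgeCoeff S v k u * φ u := by
    intro u hu
    by_cases huv : u = v
    · simp [huv, hφv]
    by_cases huS : u ∈ S
    · have := hpos u huS
      have := (hc u hu).2
      simp only [edgeCoeff, Function.update_of_ne huv, huS, if_true]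
      gcongr
    · simpa [edgeCoeff, huv, huS] using mul_nonpos_of_nonneg_of_nonpos (hc u hu).1
        (hneg u (Finset.mem_erase.2 ⟨huv, hu⟩) huS).le
  have heq := (Finset.sum_eq_sum_iff_of_le hle).1 ((Finset.sum_le_sum hle).antisymm hφ)
  have hne : ∀ u ∈ V.erase v, c u = edgeCoeff S v k u := fun u hu ↦
    mul_right_cancel₀ (by by_cases huS : u ∈ S; exacts [(hpos u huS).ne', (hneg u hu huS).ne])
      (heq u (Finset.mem_of_mem_erase hu))
  rw [← Finset.sum_erase_add V _ hv, ← Finset.sum_erase_add V _ hv,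
    Finset.sum_congr rfl fun u hu ↦ by rw [hne u hu], add_right_inj] at hL
  intro u hu
  obtain rfl | huv := eq_or_ne u v
  · exact mul_right_cancel₀ hLv hL
  · exact hne u (Finset.mem_erase.2 ⟨huv, hu⟩)

end Zonotope

section CrossedEdges

lemma div_mem_Ioo_iff_mem_uIoo {a b t : ℝ} (hb : b ≠ 0) :
    (t - a) / b ∈ Set.Ioo 0 1 ↔ t ∈ Set.uIoo a (a + b) := by
  rcases hb.lt_or_gt with hb | hb
  · rw [Set.uIoo_of_ge (by linarith), Set.mem_Ioo, Set.mem_Ioo, div_lt_one_of_neg hb,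
      lt_div_iff_of_neg hb, zero_mul, sub_neg, lt_sub_iff_add_lt', and_comm]
  · rw [Set.uIoo_of_le (by linarith), Set.mem_Ioo, Set.mem_Ioo, div_pos_iff_of_pos_right hb,
      div_lt_one hb, sub_pos, sub_lt_iff_lt_add']

variable {E : Type*} [AddCommGroup E] [Module ℝ E] [DecidableEq E] {V : Finset E} {x : E}
  {L : Module.Dual ℝ E} {t : ℝ}

open Classical in
/-- The edges of the zonotope that meet the section at height `t` in their interior, encoded as
pairs of a generator and a pattern. -/
def crossedEdges (V : Finset E) (x : E) (L : Module.Dual ℝ E) (t : ℝ) :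
    Finset (Σ _ : E, Finset E) :=
  (V.sigma (edgePatterns V)).filter fun e ↦
    t ∈ Set.uIoo (L (x + ∑ u ∈ e.2, u)) (L (x + ∑ u ∈ e.2, u) + L e.1)

lemma mem_crossedEdges (hL : ∀ u ∈ V, L u ≠ 0) {e : Σ _ : E, Finset E} :
    e ∈ crossedEdges V x L t ↔ (e.1 ∈ V ∧ e.2 ∈ edgePatterns V e.1) ∧
      (t - L (x + ∑ u ∈ e.2, u)) / L e.1 ∈ Set.Ioo 0 1 := by
  simp only [crossedEdges, Finset.mem_filter, Finset.mem_sigma]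
  exact and_congr_right fun he ↦ (div_mem_Ioo_iff_mem_uIoo (hL _ he.1)).symm

/-- The point of height `t` on the line through the edge `e`. -/
def edgeSectionPoint (V : Finset E) (x : E) (L : Module.Dual ℝ E) (t : ℝ) (e : Σ _ : E, Finset E) :
    E :=
  zonotopePoint V x (edgeCoeff e.2 e.1 ((t - L (x + ∑ u ∈ e.2, u)) / L e.1))

lemma map_zonotopePoint_edgeCoeff {v : E} {S : Finset E} {k : ℝ} (hv : v ∈ V)
    (hS : S ⊆ V.erase v) :
    L (zonotopePoint V x (edgeCoeff S v k)) = L (x + ∑ u ∈ S, u) + k * L v := by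
  rw [zonotopePoint_edgeCoeff hv hS, map_add L _ (k • v), map_smul, smul_eq_mul]

lemma map_edgeSectionPoint (hL : ∀ u ∈ V, L u ≠ 0) {e : Σ _ : E, Finset E} (he : e.1 ∈ V)
    (hS : e.2 ⊆ V.erase e.1) : L (edgeSectionPoint V x L t e) = t := by
  rw [edgeSectionPoint, map_zonotopePoint_edgeCoeff he hS, div_mul_cancel₀ _ (hL _ he),
    add_sub_cancel]

lemma injOn_edgeSectionPoint (hL : ∀ u ∈ V, L u ≠ 0) :
    Set.InjOn (edgeSectionPoint V x L t) (crossedEdges V x L t) := by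
  rintro ⟨v, S⟩ he ⟨v', S'⟩ he' heq
  obtain ⟨⟨hv, hS⟩, hk⟩ := (mem_crossedEdges hL).1 he
  obtain ⟨⟨hv', hS'⟩, hk'⟩ := (mem_crossedEdges hL).1 he'
  obtain ⟨hSV', φ, hφv, hpos, hneg⟩ := mem_edgePatterns.1 hS'
  obtain ⟨rfl, rfl⟩ := eq_and_eq_of_edgeCoeff_eq hv (mem_edgePatterns.1 hS).1 hSV' hk
    (eq_edgeCoeff_of_le hv' (hL _ hv') hφv hpos hneg
      (fun u _ ↦ edgeCoeff_mem_Icc (Set.Ioo_subset_Icc_self hk) u) (congrArg φ heq).ge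
      (congrArg L heq))
  rfl

end CrossedEdges

section SectionVertices

variable {E : Type*} [NormedAddCommGroup E] [NormedSpace ℝ E] [DecidableEq E] {V : Finset E}
  {x : E} {c : E → ℝ} {L : Module.Dual ℝ E} {t : ℝ}

lemma exists_dual_of_mem_extremePoints
    (hV : (V : Set E).Pairwise fun u w ↦ LinearIndependent ℝ ![u, w]) {v : E} (hv : v ∈ V)
    (hLv : L v ≠ 0) (hc : ∀ u ∈ V, c u ∈ Set.Icc 0 1) (hcv : c v ∈ Set.Ioo 0 1)
    (hp : zonotopePoint V x c ∈ Set.extremePoints ℝ (zonotope V x ∩ {y | L y = t})) :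
    ∃ φ : Module.Dual ℝ E, φ v = 0 ∧ ∀ u ∈ V.erase v, 0 < (2 * c u - 1) * φ u := by
  rcases exists_dual_pos_or_exists_sum_mem (ℝ ∙ v).closed_of_finiteDimensional (V.erase v)
    (fun u ↦ (2 * c u - 1) • u) with ⟨f, hfv, hf⟩ | ⟨a, ha, ⟨w, hw, haw⟩, hsum⟩
  · refine ⟨f, hfv v (Submodule.mem_span_singleton_self v), fun u hu ↦ ?_⟩
    simpa only [map_smul, smul_eq_mul, ContinuousLinearMap.coe_coe] using hf u hu
  obtain ⟨b, hb⟩ := Submodule.mem_span_singleton.1 hsum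
  set h : E → ℝ := Function.update (fun u ↦ a u * (1 - 2 * c u)) v b
  have hhv : h v = b := Function.update_self ..
  have hh : ∀ u ∈ V.erase v, h u = a u * (1 - 2 * c u) := fun u hu ↦
    Function.update_of_ne (Finset.ne_of_mem_erase hu) ..
  have hzero : ∑ u ∈ V, h u • u = 0 := by
    rw [← Finset.sum_erase_add V _ hv, hhv, hb, ← Finset.sum_add_distrib]
    refine Finset.sum_eq_zero fun u hu ↦ ?_
    rw [hh u hu]
    module
  have hwV := Finset.mem_of_mem_erase hw
  refine absurd hzero (sum_smul_ne_zero_of_mem_extremePoints hv hwV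
    (hV hv hwV (Finset.ne_of_mem_erase hw).symm) hLv hc hcv hp (fun u hu hu0 ↦ ?_)
    (fun u hu hu1 ↦ ?_) (fun hw0 ↦ ?_) fun hw1 ↦ ?_)
  · obtain rfl | huv := eq_or_ne u v
    · exact absurd hu0 hcv.1.ne'
    · have huU := Finset.mem_erase.2 ⟨huv, hu⟩
      linarith [hh u huU, hu0 ▸ hh u huU, ha u huU]
  · obtain rfl | huv := eq_or_ne u v
    · exact absurd hu1 hcv.2.ne
    · have huU := Finset.mem_erase.2 ⟨huv, hu⟩
      linarith [hu1 ▸ hh u huU, ha u huU]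
  · linarith [hw0 ▸ hh w hw]
  · linarith [hw1 ▸ hh w hw]

lemma mem_edgePatterns_of_mem_extremePoints
    (hV : (V : Set E).Pairwise fun u w ↦ LinearIndependent ℝ ![u, w]) {v : E} (hv : v ∈ V)
    (hLv : L v ≠ 0) {S : Finset E} (hS : S ⊆ V.erase v) {k : ℝ} (hk : k ∈ Set.Ioo 0 1)
    (hp : zonotopePoint V x (edgeCoeff S v k) ∈
      Set.extremePoints ℝ (zonotope V x ∩ {y | L y = t})) : S ∈ edgePatterns V v := by
  have hcv : edgeCoeff S v k v = k := Function.update_self ..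
  obtain ⟨φ, hφv, hφ⟩ := exists_dual_of_mem_extremePoints hV hv hLv
    (fun u _ ↦ edgeCoeff_mem_Icc (Set.Ioo_subset_Icc_self hk) u) (by rwa [hcv]) hp
  have hcoeff : ∀ u ∈ V.erase v, edgeCoeff S v k u = if u ∈ S then 1 else 0 := fun u hu ↦
    Function.update_of_ne (Finset.ne_of_mem_erase hu) ..
  refine mem_edgePatterns.2 ⟨hS, φ, hφv, fun u hu ↦ ?_, fun u hu huS ↦ ?_⟩
  · have := hφ u (hS hu)
    rw [hcoeff u (hS hu), if_pos hu] at this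
    linarith
  · have := hφ u hu
    rw [hcoeff u hu, if_neg huS] at this
    linarith

lemma exists_eq_edgeCoeff_of_mem_extremePoints
    (hV : (V : Set E).Pairwise fun u w ↦ LinearIndependent ℝ ![u, w]) (hL : ∀ u ∈ V, L u ≠ 0)
    (hgen : ∀ S ⊆ V, L (x + ∑ u ∈ S, u) ≠ t) {p : E}
    (hp : p ∈ Set.extremePoints ℝ (zonotope V x ∩ {y | L y = t})) :
    ∃ v ∈ V, ∃ S ∈ edgePatterns V v, ∃ k ∈ Set.Ioo 0 1,
      p = zonotopePoint V x (edgeCoeff S v k) := by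
  obtain ⟨c, hc, rfl⟩ := mem_zonotope_iff.1 hp.1.1
  obtain ⟨v, hv, hcv⟩ := exists_coeff_mem_Ioo hc fun S hS ↦ hp.1.2 ▸ hgen S hS
  have hS : (V.erase v).filter (c · = 1) ⊆ V.erase v := Finset.filter_subset _ _
  have heq : zonotopePoint V x c =
      zonotopePoint V x (edgeCoeff ((V.erase v).filter (c · = 1)) v (c v)) := by
    refine congrArg (x + ·) (Finset.sum_congr rfl fun u hu ↦ ?_)
    obtain rfl | huv := eq_or_ne u v
    · rw [edgeCoeff, Function.update_self]
    have hIoo : c u ∉ Set.Ioo 0 1 := fun hcu ↦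
      notMem_extremePoints_of_mem_Ioo hu hv (hV hu hv huv) (hL u hu) hc hcu hcv hp
    have h01 : c u ≠ 1 → c u = 0 := fun h1 ↦ by_contra fun h0 ↦
      hIoo ⟨(hc u hu).1.lt_of_ne' h0, (hc u hu).2.lt_of_ne h1⟩
    by_cases h1 : c u = 1
    · simp [edgeCoeff, huv, hu, h1]
    · simp [edgeCoeff, huv, h01 h1]
  exact ⟨v, hv, _, mem_edgePatterns_of_mem_extremePoints hV hv (hL v hv) hS hcv (heq ▸ hp), _,
    hcv, heq⟩

variable [FiniteDimensional ℝ E]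

lemma zonotopePoint_edgeCoeff_mem_extremePoints {S : Finset E} {v : E} {k : ℝ} (hv : v ∈ V)
    (hLv : L v ≠ 0) (hS : S ∈ edgePatterns V v) (hk : k ∈ Set.Icc 0 1)
    (ht : L (zonotopePoint V x (edgeCoeff S v k)) = t) :
    zonotopePoint V x (edgeCoeff S v k) ∈
      Set.extremePoints ℝ (zonotope V x ∩ {y | L y = t}) := by
  obtain ⟨-, φ, hφv, hpos, hneg⟩ := mem_edgePatterns.1 hS
  set e := edgeCoeff S v k
  refine exposedPoints_subset_extremePoints
    ⟨⟨zonotopePoint_mem fun u _ ↦ edgeCoeff_mem_Icc hk u, ht⟩, φ.toContinuousLinearMap, ?_⟩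
  rintro y ⟨hy, hyt⟩
  obtain ⟨c, hc, rfl⟩ := mem_zonotope_iff.1 hy
  have heq : φ (zonotopePoint V x e) ≤ φ (zonotopePoint V x c) →
      zonotopePoint V x c = zonotopePoint V x e := fun h ↦
    congrArg (x + ·) (Finset.sum_congr rfl fun u hu ↦ by
      rw [eq_edgeCoeff_of_le hv hLv hφv hpos hneg hc h (hyt.trans ht.symm) u hu])
  exact ⟨le_of_not_gt fun h ↦ h.ne' (congrArg φ (heq h.le)), heq⟩

lemma extremePoints_section_eq
    (hV : (V : Set E).Pairwise fun u w ↦ LinearIndependent ℝ ![u, w]) (hL : ∀ u ∈ V, L u ≠ 0)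
    (hgen : ∀ S ⊆ V, L (x + ∑ u ∈ S, u) ≠ t) :
    Set.extremePoints ℝ (zonotope V x ∩ {y | L y = t}) =
      edgeSectionPoint V x L t '' crossedEdges V x L t := by
  ext p
  constructor
  · intro hp
    obtain ⟨v, hv, S, hS, k, hk, rfl⟩ := exists_eq_edgeCoeff_of_mem_extremePoints hV hL hgen hp
    have ht : L (zonotopePoint V x (edgeCoeff S v k)) = t := hp.1.2
    have hkt : (t - L (x + ∑ u ∈ S, u)) / L v = k := by
      rw [← ht, map_zonotopePoint_edgeCoeff hv (mem_edgePatterns.1 hS).1, add_sub_cancel_left,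
        mul_div_cancel_right₀ _ (hL v hv)]
    exact ⟨⟨v, S⟩, (mem_crossedEdges hL).2 ⟨⟨hv, hS⟩, hkt ▸ hk⟩, by rw [edgeSectionPoint, hkt]⟩
  · rintro ⟨e, he, rfl⟩
    obtain ⟨⟨hv, hS⟩, hk⟩ := (mem_crossedEdges hL).1 he
    exact zonotopePoint_edgeCoeff_mem_extremePoints hv (hL _ hv) hS (Set.Ioo_subset_Icc_self hk)
      (map_edgeSectionPoint hL hv (mem_edgePatterns.1 hS).1)

lemma ncard_extremePoints_section
    (hV : (V : Set E).Pairwise fun u w ↦ LinearIndependent ℝ ![u, w]) (hL : ∀ u ∈ V, L u ≠ 0)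
    (hgen : ∀ S ⊆ V, L (x + ∑ u ∈ S, u) ≠ t) :
    (Set.extremePoints ℝ (zonotope V x ∩ {y | L y = t})).ncard = (crossedEdges V x L t).card := by
  rw [extremePoints_section_eq hV hL hgen, (injOn_edgeSectionPoint hL).ncard_image,
    Set.ncard_coe_finset]

end SectionVertices

section Average

open MeasureTheory

lemma integral_indicator_uIoo_one {a b m M : ℝ} (ha : a ∈ Set.Icc m M) (hb : b ∈ Set.Icc m M) :
    ∫ t in m..M, (Set.uIoo a b).indicator (1 : ℝ → ℝ) t = |b - a| := by
  have hsub : Set.uIoo a b ⊆ Set.Ioc m M := fun t ht ↦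
    ⟨(le_min ha.1 hb.1).trans_lt ht.1, ht.2.le.trans (max_le ha.2 hb.2)⟩
  rw [intervalIntegral.integral_of_le (ha.1.trans ha.2),
    Set.uIoo, integral_indicator_one measurableSet_Ioo,
    measureReal_restrict_apply measurableSet_Ioo, ← Set.uIoo, Set.inter_eq_left.2 hsub,
    measureReal_def, Real.volume_uIoo,
    ENNReal.toReal_ofReal (abs_nonneg _)]

variable {E : Type*} [AddCommGroup E] [Module ℝ E] {V : Finset E} {x : E}

variable [DecidableEq E]

lemma edge_heights_mem_Icc (L : Module.Dual ℝ E) {v : E} {S : Finset E} (hv : v ∈ V)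
    (hS : S ⊆ V.erase v) {m M : ℝ} (hm : IsLeast (L '' zonotope V x) m)
    (hM : IsGreatest (L '' zonotope V x) M) :
    L (x + ∑ u ∈ S, u) ∈ Set.Icc m M ∧ L (x + ∑ u ∈ S, u) + L v ∈ Set.Icc m M := by
  have hmem : ∀ k ∈ Set.Icc (0 : ℝ) 1, L (x + ∑ u ∈ S, u) + k * L v ∈ Set.Icc m M := by
    intro k hk
    rw [← map_zonotopePoint_edgeCoeff hv hS]
    have himage := Set.mem_image_of_mem L
      (zonotopePoint_mem (x := x) fun u (_ : u ∈ V) ↦ edgeCoeff_mem_Icc (S := S) (v := v) hk u)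
    exact ⟨hm.2 himage, hM.2 himage⟩
  exact ⟨by simpa using hmem 0 (by simp), by simpa using hmem 1 (by simp)⟩

lemma integral_card_crossedEdges (L : Module.Dual ℝ E) {m M : ℝ}
    (hm : IsLeast (L '' zonotope V x) m) (hM : IsGreatest (L '' zonotope V x) M) :
    ∫ t in m..M, ((crossedEdges V x L t).card : ℝ) =
      ∑ v ∈ V, ((edgePatterns V v).card : ℝ) * |L v| := by
  classical
  have hcard : ∀ t, ((crossedEdges V x L t).card : ℝ) = ∑ e ∈ V.sigma (edgePatterns V),
      (Set.uIoo (L (x + ∑ u ∈ e.2, u)) (L (x + ∑ u ∈ e.2, u) + L e.1)).indicator 1 t := fun t ↦ by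
    simp only [crossedEdges, Finset.card_filter, Nat.cast_sum, Nat.cast_ite, Nat.cast_one,
      Nat.cast_zero, Set.indicator_apply, Pi.one_apply]
  simp only [hcard]
  rw [intervalIntegral.integral_finsetSum, Finset.sum_sigma]
  · refine Finset.sum_congr rfl fun v hv ↦ ?_
    rw [← nsmul_eq_mul]
    refine Finset.sum_eq_card_nsmul fun S hS ↦ ?_
    obtain ⟨h0, h1⟩ := edge_heights_mem_Icc (x := x) L hv (mem_edgePatterns.1 hS).1 hm hM
    rw [integral_indicator_uIoo_one h0 h1, add_sub_cancel_left]
  · intro e _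
    rw [intervalIntegrable_iff]
    exact (integrableOn_const (by simp)).indicator measurableSet_Ioo

/-- The number of vertices of almost every section is the number of edges crossed. -/
theorem avgVert_zonotope {d : ℕ} {V : Finset (Fin d → ℝ)} {x z : Fin d → ℝ}
    (hV : (V : Set (Fin d → ℝ)).Pairwise fun u w ↦ LinearIndependent ℝ ![u, w])
    (hz : ∀ u ∈ V, dotp z u ≠ 0) :
    avgVert (zonotope V x) z =
      (∑ v ∈ V, |dotp z v|)⁻¹ * ∑ v ∈ V, ((edgePatterns V v).card : ℝ) * |dotp z v| := by
  obtain ⟨L, hL⟩ : ∃ L : Module.Dual ℝ (Fin d → ℝ), dotp z = L := ⟨dotProductEquiv ℝ (Fin d) z, rfl⟩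
  have hm := isLeast_image_zonotope (V := V) (x := x) L
  have hM := isGreatest_image_zonotope (V := V) (x := x) L
  have hvert : ∀ᵐ t, nVert (zonotope V x ∩ {y | L y = t}) = (crossedEdges V x L t).card := by
    have hgen := (V.powerset.image fun S ↦ L (x + ∑ u ∈ S, u)).countable_toSet.ae_notMem volume
    filter_upwards [hgen] with t ht
    exact ncard_extremePoints_section hV (fun u hu ↦ hL ▸ hz u hu) fun S hS h ↦
      ht (Finset.mem_coe.2 (Finset.mem_image.2 ⟨S, Finset.mem_powerset.2 hS, h⟩))
  have hwidth : L x + ∑ u ∈ V, max 0 (L u) - (L x + ∑ u ∈ V, min 0 (L u)) = ∑ v ∈ V, |L v| := by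
    rw [add_sub_add_left_eq_sub, ← Finset.sum_sub_distrib]
    exact Finset.sum_congr rfl fun v _ ↦ by rw [max_sub_min_eq_abs, sub_zero]
  rw [avgVert, tMax, tMin, hL, hm.csInf_eq, hM.csSup_eq, hwidth]
  refine congrArg _ ((intervalIntegral.integral_congr_ae ?_).trans
    (integral_card_crossedEdges L hm hM))
  filter_upwards [hvert] with t ht _
  rw [ht]

end Average

section WeightedAbs

lemma abs_add_add_abs_sub_of_abs_lt {a b : ℝ} (h : |b| < |a|) : |a + b| + |a - b| = 2 * |a| := by
  rcases abs_cases a with ⟨ha, -⟩ | ⟨ha, -⟩ <;> rw [ha] at h ⊢ <;> have hb := abs_lt.1 h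
  · rw [abs_of_pos (by linarith), abs_of_pos (by linarith)]
    ring
  · rw [abs_of_neg (by linarith), abs_of_neg (by linarith)]
    ring

lemma sum_mul_abs_add_sum_mul_abs_sub {ι : Type*} [DecidableEq ι] {V : Finset ι} {v : ι}
    {e g : ι → ℝ} (k : ι → ℝ) (hv : v ∈ V) (hev : e v = 0)
    (hge : ∀ u ∈ V.erase v, |g u| < |e u|) :
    ∑ u ∈ V, k u * |e u + g u| + ∑ u ∈ V, k u * |e u - g u| =
      2 * (∑ u ∈ V.erase v, k u * |e u| + k v * |g v|) := by
  rw [← Finset.sum_add_distrib, ← Finset.sum_erase_add V _ hv, hev, zero_add, zero_sub, abs_neg,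
    mul_add, Finset.mul_sum, two_mul (k v * _)]
  refine congrArg (· + _) (Finset.sum_congr rfl fun u hu ↦ ?_)
  rw [← mul_add, abs_add_add_abs_sub_of_abs_lt (hge u hu), mul_left_comm]

lemma eventually_forall_abs_mul_lt_abs {ι : Type*} {U : Finset ι} {e : ι → ℝ} (g : ι → ℝ)
    (he : ∀ u ∈ U, e u ≠ 0) : ∀ᶠ r in 𝓝[>] (0 : ℝ), ∀ u ∈ U, |r * g u| < |e u| :=
  (Finset.eventually_all U).2 fun u hu ↦ nhdsWithin_le_nhds <|
    (by fun_prop : Continuous fun r : ℝ ↦ |r * g u|).continuousAt.eventually_lt_const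
      (by simpa only [zero_mul, abs_zero, abs_pos] using he u hu)

/-- Only the term of `v` has a kink where a line of functionals crosses the hyperplane of those
vanishing at `v`, away from the hyperplanes of the other vectors. -/
theorem eq_zero_of_sum_mul_abs_eq_zero {E : Type*} [AddCommGroup E] [Module ℝ E] [DecidableEq E]
    {V : Finset E} {v : E} {k : E → ℝ} (hv : v ∈ V) (hv0 : v ≠ 0)
    (hV : ∀ u ∈ V.erase v, LinearIndependent ℝ ![v, u])
    (h : ∀ L : Module.Dual ℝ E, (∀ u ∈ V, L u ≠ 0) → ∑ u ∈ V, k u * |L u| = 0) : k v = 0 := by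
  obtain ⟨e, hev, he⟩ := exists_dual_eq_zero_forall_ne_zero hV
  obtain ⟨g, hg⟩ : ∃ g : Module.Dual ℝ E, g v ≠ 0 := by
    by_contra! hg
    exact hv0 ((Module.forall_dual_apply_eq_zero_iff ℝ v).1 hg)
  obtain ⟨r, hr, hsmall⟩ := mem_nhdsGT_iff_exists_Ioc_subset.1
    (eventually_forall_abs_mul_lt_abs g he)
  have hline : ∀ s ≠ 0, (∀ u ∈ V.erase v, |s * g u| < |e u|) →
      ∑ u ∈ V, k u * |e u + s * g u| = 0 := by
    refine fun s hs hsg ↦ h (e + s • g) fun u hu h0 ↦ ?_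
    obtain rfl | huv := eq_or_ne u v
    · exact mul_ne_zero hs hg (by simpa [hev] using h0)
    · have hlt := hsg u (Finset.mem_erase.2 ⟨huv, hu⟩)
      rw [show e u = -(s * g u) from eq_neg_of_add_eq_zero_left h0, abs_neg] at hlt
      exact hlt.false
  have hkink : ∀ s ∈ Set.Ioc 0 r, ∑ u ∈ V.erase v, k u * |e u| + s * (k v * |g v|) = 0 := by
    intro s hs
    have hneg := hline (-s) (neg_ne_zero.2 hs.1.ne') fun u hu ↦ by
      simpa only [neg_mul, abs_neg] using hsmall hs u hu
    simp only [neg_mul, ← sub_eq_add_neg] at hneg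
    have hsum := sum_mul_abs_add_sum_mul_abs_sub k hv hev (hsmall hs)
    rw [hline s hs.1.ne' (hsmall hs), hneg, abs_mul, abs_of_pos hs.1] at hsum
    linarith
  have hprod : r * (k v * |g v|) = 0 := by
    linarith [hkink r ⟨hr, le_rfl⟩, hkink (r / 2) ⟨half_pos hr, half_le_self hr.le⟩]
  simpa only [mul_eq_zero, (Set.mem_Ioi.1 hr).ne', abs_eq_zero, hg, or_false, false_or] using hprod

end WeightedAbs

section Generators

variable {K E : Type*} [DivisionRing K] [AddCommGroup E] [Module K E]

lemma nontrivial_of_span_eq_top {V : Finset E} (hE : 1 < Module.finrank K E)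
    (hspan : Submodule.span K (V : Set E) = ⊤) : V.Nontrivial := by
  rw [← Finset.one_lt_card_iff_nontrivial]
  refine hE.trans_le ?_
  rw [← finrank_top, ← hspan]
  exact finrank_span_finset_le_card V

lemma pairwise_linearIndependent_pair {s : Set E} (hne : ∀ v ∈ s, v ≠ 0)
    (hpair : ∀ u ∈ s, ∀ v ∈ s, u ≠ v → ∀ c : K, v ≠ c • u) :
    s.Pairwise fun u v ↦ LinearIndependent K ![u, v] := fun u hu v hv huv ↦
  (LinearIndependent.pair_iff' (hne u hu)).2 fun c h ↦ hpair u hu v hv huv c h.symm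

end Generators

lemma ne_zero_of_forall_dotp_ne_zero {d : ℕ} {V : Finset (Fin d → ℝ)} {z : Fin d → ℝ}
    (hV : V.Nonempty) (hz : ∀ u ∈ V, dotp z u ≠ 0) : z ≠ 0 := by
  rintro rfl
  obtain ⟨v, hv⟩ := hV
  exact hz v hv (zero_dotProduct v)

theorem zonotope_const_avgVert_deg_general (V : Finset (Fin 3 → ℝ)) (x : Fin 3 → ℝ)
    (hV : V.Nontrivial)
    (hpair : (V : Set (Fin 3 → ℝ)).Pairwise fun u v ↦ LinearIndependent ℝ ![u, v])
    (P : Set (Fin 3 → ℝ)) (hP : P = {x} + ∑ v ∈ V, segment ℝ 0 v) (lam : ℝ)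
    (havg : ∀ z : Fin 3 → ℝ, (∀ u ∈ V, dotp z u ≠ 0) → avgVert P z = lam) :
    ∀ v ∈ V, lam = 2 * (degF V v : ℝ) := by
  intro v hv
  have hvV : ∀ u ∈ V.erase v, LinearIndependent ℝ ![v, u] := fun u hu ↦
    hpair hv (Finset.mem_of_mem_erase hu) (Finset.ne_of_mem_erase hu).symm
  obtain ⟨w, hw⟩ : (V.erase v).Nonempty := hV.erase_nonempty
  suffices hcard : ((edgePatterns V v).card : ℝ) - lam = 0 by
    rw [← sub_eq_zero.1 hcard, card_edgePatterns hv hvV ⟨w, hw⟩, Nat.cast_mul, Nat.cast_ofNat]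
  refine eq_zero_of_sum_mul_abs_eq_zero (k := fun u ↦ ((edgePatterns V u).card : ℝ) - lam) hv
    ((hvV w hw).ne_zero 0) hvV fun L hL ↦ ?_
  obtain ⟨z, rfl⟩ := (dotProductEquiv ℝ (Fin 3)).surjective L
  have hpos : 0 < ∑ u ∈ V, |dotp z u| := Finset.sum_pos (fun u hu ↦ abs_pos.2 (hL u hu)) ⟨v, hv⟩
  have hz := havg z hL
  rw [hP, ← zonotope, avgVert_zonotope hpair hL, inv_mul_eq_iff_eq_mul₀ hpos.ne', mul_comm] at hz
  simp only [sub_mul, Finset.sum_sub_distrib, ← Finset.mul_sum]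
  exact sub_eq_zero.2 hz

/-- If `P ⊂ ℝ³` is a zonotope with generator set `V` (pairwise linearly
independent, spanning `ℝ³`) and `A(P,z) = λ` for every nonzero `z`, then
`λ = 2 · deg v` for every `v ∈ V` in the hypergraph `ℱ`. -/
theorem zonotope_const_avgVert_deg (V : Finset (Fin 3 → ℝ)) (x : Fin 3 → ℝ)
    (hne : ∀ v ∈ V, v ≠ 0)
    (hpair : ∀ u ∈ V, ∀ v ∈ V, u ≠ v → ∀ c : ℝ, v ≠ c • u)
    (hspan : Submodule.span ℝ (V : Set (Fin 3 → ℝ)) = ⊤)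
    (P : Set (Fin 3 → ℝ)) (hP : P = {x} + ∑ v ∈ V, segment ℝ 0 v)
    (lam : ℝ) (havg : ∀ z : Fin 3 → ℝ, z ≠ 0 → avgVert P z = lam) :
    ∀ v ∈ V, lam = 2 * (degF V v : ℝ) := by
  have hV : V.Nontrivial := nontrivial_of_span_eq_top (by simp) hspan
  exact zonotope_const_avgVert_deg_general V x hV (pairwise_linearIndependent_pair hne hpair) P hP
    lam fun z hz ↦ havg z (ne_zero_of_forall_dotp_ne_zero hV.nonempty hz)
end
end

section
/- Let P ⊂ ℝ^d be a convex polytope with nonempty interior. If there is a constant λ such that A(P,z) = λ for every nonzero z ∈ ℝ^d, then the difference body P − P = {x − y : x, y ∈ P} is a zonotope. -/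
open scoped Pointwise BigOperators

noncomputable section

/-!
If the hyperplane `f = t` avoids the vertices of `P`, each vertex of the section `P ∩ {f = t}` is
the crossing point of the hyperplane with a unique edge of `P`: the minimal face of `P` around such
a vertex meets the hyperplane transversally in a single point. Integrating over `t` shows that the
mean number of vertices times the width of `P` along `f` is the sum of `|f (w - u)|` over the edges
`[u, w]`. If the mean is a constant, the width, which is the support function of `P - P`, is
therefore a sum of functions `|f a|`, the support function of a centred sum of segments. Parallel
segments are merged to make the generators pairwise linearly independent.
-/

open Set Filter Topology MeasureTheory

section Face

variable {E : Type*} [AddCommGroup E] [Module ℝ E] {P : Set E} {x y : E}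

/-- The direction space of the minimal face of the convex set `P` containing `x`: the vectors `v`
for which a neighbourhood of `x` in the line `x + ℝ v` lies in `P`. -/
def faceDirection (hP : Convex ℝ P) (hx : x ∈ P) : Submodule ℝ E where
  carrier := {v | ∀ᶠ ε in 𝓝 (0 : ℝ), x + ε • v ∈ P}
  zero_mem' := by simp [hx]
  add_mem' {v w} hv hw := by
    have double : Tendsto (fun ε : ℝ ↦ 2 * ε) (𝓝 0) (𝓝 0) :=
      Continuous.tendsto' (by fun_prop) _ _ (by simp)
    filter_upwards [double.eventually hv, double.eventually hw] with ε hε hε'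
    convert hP hε hε' (a := 1 / 2) (b := 1 / 2) (by norm_num) (by norm_num) (by norm_num) using 1
    module
  smul_mem' c v hv := by
    have scale : Tendsto (fun ε : ℝ ↦ ε * c) (𝓝 0) (𝓝 0) :=
      Continuous.tendsto' (by fun_prop) _ _ (by simp)
    filter_upwards [scale.eventually hv] with ε hε
    rwa [smul_smul]

theorem mem_faceDirection {hP : Convex ℝ P} {hx : x ∈ P} {v : E} :
    v ∈ faceDirection hP hx ↔ ∀ᶠ ε in 𝓝 (0 : ℝ), x + ε • v ∈ P :=
  Iff.rfl

theorem exists_pos_mem_of_mem_faceDirection {hP : Convex ℝ P} {hx : x ∈ P} {v : E}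
    (hv : v ∈ faceDirection hP hx) : ∃ ε > (0 : ℝ), x + ε • v ∈ P ∧ x - ε • v ∈ P := by
  have h := (mem_faceDirection.1 hv).and (mem_faceDirection.1 (neg_mem hv))
  obtain ⟨ε, ⟨hε, hε'⟩, hε0⟩ := ((h.filter_mono nhdsWithin_le_nhds).and
    (self_mem_nhdsWithin : Ioi (0 : ℝ) ∈ 𝓝[>] 0)).exists
  exact ⟨ε, hε0, hε, by simpa [sub_eq_add_neg] using hε'⟩

theorem sub_mem_faceDirection (hP : Convex ℝ P) (hx : x ∈ P) {p q : E} (hp : p ∈ P) (hq : q ∈ P)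
    (hxpq : x ∈ openSegment ℝ p q) : q - p ∈ faceDirection hP hx := by
  obtain ⟨a, b, ha, hb, hab, rfl⟩ := hxpq
  have ha' : ∀ᶠ ε in 𝓝 (0 : ℝ), ε < a := gt_mem_nhds ha
  have hb' : ∀ᶠ ε in 𝓝 (0 : ℝ), -b < ε := lt_mem_nhds (by linarith)
  filter_upwards [ha', hb'] with ε hεa hεb
  convert hP hp hq (a := a - ε) (b := b + ε) (by linarith) (by linarith) (by linarith) using 1
  module

theorem faceDirection_le_of_mem_openSegment (hP : Convex ℝ P) (hx : x ∈ P) (hy : y ∈ P) {r : E}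
    (hr : r ∈ P) (hxyr : x ∈ openSegment ℝ y r) : faceDirection hP hy ≤ faceDirection hP hx := by
  obtain ⟨a, b, ha, hb, hab, rfl⟩ := hxyr
  intro v hv
  have scale : Tendsto (fun ε : ℝ ↦ ε / a) (𝓝 0) (𝓝 0) :=
    Continuous.tendsto' (by fun_prop) _ _ (by simp)
  filter_upwards [scale.eventually hv] with ε hε
  convert hP hε hr ha.le hb.le hab using 1
  match_scalars <;> field_simp

theorem faceDirection_le_of_sub_mem (hP : Convex ℝ P) (hx : x ∈ P) (hy : y ∈ P)
    (hyx : y - x ∈ faceDirection hP hx) : faceDirection hP hy ≤ faceDirection hP hx := by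
  obtain ⟨ε, hε, -, hr⟩ := exists_pos_mem_of_mem_faceDirection hyx
  refine faceDirection_le_of_mem_openSegment hP hx hy hr
    ⟨ε / (1 + ε), 1 / (1 + ε), by positivity, by positivity,
      by field_simp; ring, ?_⟩
  match_scalars <;> field_simp <;> ring

/-- The minimal face of the convex set `P` containing `x`: the part of `P` in the affine subspace
through `x` with direction `faceDirection hP hx`. -/
def minimalFace (hP : Convex ℝ P) (hx : x ∈ P) : Set E :=
  {y ∈ P | y - x ∈ faceDirection hP hx}

theorem self_mem_minimalFace (hP : Convex ℝ P) (hx : x ∈ P) : x ∈ minimalFace hP hx :=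
  ⟨hx, by simp⟩

theorem isExtreme_minimalFace (hP : Convex ℝ P) (hx : x ∈ P) :
    IsExtreme ℝ P (minimalFace hP hx) := by
  refine ⟨sep_subset _ _, fun p hp q hq y ⟨hy, hyx⟩ hypq ↦ ⟨hp, ?_⟩⟩
  have hqp : q - p ∈ faceDirection hP hx :=
    faceDirection_le_of_sub_mem hP hx hy hyx (sub_mem_faceDirection hP hy hp hq hypq)
  rw [openSegment_eq_image'] at hypq
  obtain ⟨θ, -, rfl⟩ := hypq
  convert sub_mem hyx (Submodule.smul_mem _ θ hqp) using 1
  module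

theorem convex_minimalFace (hP : Convex ℝ P) (hx : x ∈ P) : Convex ℝ (minimalFace hP hx) := by
  have : minimalFace hP hx = P ∩ (fun y ↦ y + -x) ⁻¹' (faceDirection hP hx : Set E) := by
    ext y
    simp [minimalFace, sub_eq_add_neg]
  rw [this]
  exact hP.inter ((faceDirection hP hx).convex.translate_preimage_left _)

theorem disjoint_faceDirection_ker (hP : Convex ℝ P) (l : E →ₗ[ℝ] ℝ) {t : ℝ}
    (hx : x ∈ extremePoints ℝ (P ∩ {y | l y = t})) :
    Disjoint (faceDirection hP hx.1.1) (LinearMap.ker l) := by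
  rw [Submodule.disjoint_def]
  intro v hv hlv
  rw [LinearMap.mem_ker] at hlv
  have hxt : l x = t := hx.1.2
  obtain ⟨ε, hε, hadd, hsub⟩ := exists_pos_mem_of_mem_faceDirection hv
  have hεv : x + ε • v = x := hx.2 ⟨hadd, by simp [hlv, hxt]⟩ ⟨hsub, by simp [hlv, hxt]⟩
    ⟨1 / 2, 1 / 2, by norm_num, by norm_num, by norm_num, by module⟩
  exact (smul_eq_zero.1 (add_eq_left.1 hεv)).resolve_left hε.ne'

theorem injOn_minimalFace (hP : Convex ℝ P) (hx : x ∈ P) {l : E →ₗ[ℝ] ℝ}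
    (hl : Disjoint (faceDirection hP hx) (LinearMap.ker l)) : InjOn l (minimalFace hP hx) := by
  intro y hy z hz hyz
  have hsub : y - z ∈ faceDirection hP hx := by simpa using sub_mem hy.2 hz.2
  exact sub_eq_zero.1 (Submodule.disjoint_def.1 hl _ hsub (by simp [hyz]))

theorem mem_extremePoints_inter_of_isExtreme {F : Set E} (hF : IsExtreme ℝ P F) {l : E → ℝ}
    (hl : InjOn l F) (hx : x ∈ F) : x ∈ extremePoints ℝ (P ∩ {y | l y = l x}) :=
  ⟨⟨hF.1 hx, rfl⟩, fun _ hp _ hq hxpq ↦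
    hl (hF.left_mem_of_mem_openSegment hp.1 hq.1 hx hxpq) hx hp.2⟩

end Face

section Edge

variable {E : Type*} [AddCommGroup E] [Module ℝ E] {P : Set E} {x : E}

theorem left_mem_extremePoints_segment (u w : E) : u ∈ extremePoints ℝ (segment ℝ u w) := by
  refine ⟨left_mem_segment ℝ u w, ?_⟩
  rw [segment_eq_image']
  rintro _ ⟨a, ha, rfl⟩ _ ⟨b, hb, rfl⟩ hu
  rw [openSegment_eq_image'] at hu
  obtain ⟨θ, hθ, hu⟩ := hu
  have hzero : ((1 - θ) * a + θ * b) • (w - u) = 0 := by linear_combination (norm := module) hu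
  rcases smul_eq_zero.1 hzero with hcoeff | hwu
  · have ha0 : a = 0 := by nlinarith [hθ.1, hθ.2, ha.1, mul_nonneg hθ.1.le hb.1]
    simp [ha0]
  · simp [hwu]

theorem injOn_segment {l : E →ₗ[ℝ] ℝ} {u w : E} (h : l u ≠ l w) : InjOn l (segment ℝ u w) := by
  rw [segment_eq_image']
  rintro _ ⟨a, -, rfl⟩ _ ⟨b, -, rfl⟩ hab
  have hab' : a * (l w - l u) = b * (l w - l u) := by simpa using hab
  rw [mul_right_cancel₀ (sub_ne_zero.2 h.symm) hab']

theorem image_segment_eq_Icc {l : E →ₗ[ℝ] ℝ} {u w : E} (h : l u ≤ l w) :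
    l '' segment ℝ u w = Icc (l u) (l w) := by
  rw [← segment_eq_Icc h]
  exact image_segment ℝ l.toAffineMap u w

theorem image_openSegment_eq_Ioo {l : E →ₗ[ℝ] ℝ} {u w : E} (h : l u < l w) :
    l '' openSegment ℝ u w = Ioo (l u) (l w) := by
  rw [← openSegment_eq_Ioo h]
  exact image_openSegment ℝ l.toAffineMap u w

/-- The edges of `P`, each with both of its orientations: the pairs of distinct endpoints of
segments that are faces of `P`. -/
def orientedEdges (P : Set E) : Set (E × E) :=
  {e | e.1 ≠ e.2 ∧ IsExtreme ℝ P (segment ℝ e.1 e.2)}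

theorem swap_mem_orientedEdges {e : E × E} :
    e.swap ∈ orientedEdges P ↔ e ∈ orientedEdges P := by
  simp [orientedEdges, segment_symm ℝ e.2, ne_comm]

theorem fst_mem_extremePoints {e : E × E} (he : e ∈ orientedEdges P) : e.1 ∈ extremePoints ℝ P :=
  he.2.extremePoints_subset_extremePoints (left_mem_extremePoints_segment _ _)

theorem snd_mem_extremePoints {e : E × E} (he : e ∈ orientedEdges P) : e.2 ∈ extremePoints ℝ P :=
  fst_mem_extremePoints (swap_mem_orientedEdges.2 he)

theorem finite_orientedEdges (hP : (extremePoints ℝ P).Finite) : (orientedEdges P).Finite :=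
  (hP.prod hP).subset fun _ he ↦ ⟨fst_mem_extremePoints he, snd_mem_extremePoints he⟩

theorem orientedEdge_unique {e e' : E × E} (he : e ∈ orientedEdges P) (he' : e' ∈ orientedEdges P)
    (hxe : x ∈ openSegment ℝ e.1 e.2) (hxe' : x ∈ openSegment ℝ e'.1 e'.2) {l : E → ℝ} {t : ℝ}
    (ht : t ∈ Ioo (l e.1) (l e.2)) (ht' : t ∈ Ioo (l e'.1) (l e'.2)) : e = e' := by
  have hu := fst_mem_extremePoints he
  have hw := snd_mem_extremePoints he
  have hx := openSegment_subset_segment ℝ _ _ hxe'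
  have hu' := (mem_extremePoints_iff_forall_segment.1 hu).2 _ (fst_mem_extremePoints he').1 _
    (snd_mem_extremePoints he').1 (he'.2.left_mem_of_mem_openSegment hu.1 hw.1 hx hxe)
  have hw' := (mem_extremePoints_iff_forall_segment.1 hw).2 _ (fst_mem_extremePoints he').1 _
    (snd_mem_extremePoints he').1 (he'.2.right_mem_of_mem_openSegment hu.1 hw.1 hx hxe)
  have hfst : e'.1 = e.1 := hu'.resolve_right fun h ↦ by linarith [ht.1, ht'.2, congrArg l h]
  have hsnd : e'.2 = e.2 := hw'.resolve_left fun h ↦ by linarith [ht.2, ht'.1, congrArg l h]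
  exact Prod.ext hfst.symm hsnd.symm

end Edge

section Section

variable {E : Type*} [AddCommGroup E] [Module ℝ E] [TopologicalSpace E] {P : Set E} {x : E}

theorem exists_eq_segment_of_injOn {F : Set E} (hFc : IsCompact F) (hF : Convex ℝ F)
    (hne : F.Nonempty) (l : E →L[ℝ] ℝ) (hl : InjOn l F) :
    ∃ u w, l u ≤ l w ∧ F = segment ℝ u w := by
  obtain ⟨u, hu, hmin⟩ := hFc.exists_isMinOn hne l.continuous.continuousOn
  obtain ⟨w, hw, hmax⟩ := hFc.exists_isMaxOn hne l.continuous.continuousOn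
  refine ⟨u, w, hmin hw, Subset.antisymm (fun y hy ↦ ?_) (hF.segment_subset hu hw)⟩
  obtain ⟨z, hz, hzy⟩ := (image_segment_eq_Icc (l := l.toLinearMap) (hmin hw)).ge
    ⟨hmin hy, hmax hy⟩
  rwa [← hl (hF.segment_subset hu hw hz) hy hzy]

variable [IsTopologicalAddGroup E] [ContinuousSMul ℝ E] [T2Space E]

theorem isCompact_minimalFace (hPc : IsCompact P) (hP : Convex ℝ P) (hx : x ∈ P)
    [FiniteDimensional ℝ (faceDirection hP hx)] : IsCompact (minimalFace hP hx) :=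
  hPc.inter_right ((faceDirection hP hx).closed_of_finiteDimensional.preimage (by fun_prop))

theorem exists_isExtreme_segment (hPc : IsCompact P) (hP : Convex ℝ P) (l : E →L[ℝ] ℝ) {t : ℝ}
    (hx : x ∈ extremePoints ℝ (P ∩ {y | l y = t})) :
    ∃ u w, l u ≤ l w ∧ IsExtreme ℝ P (segment ℝ u w) ∧ x ∈ segment ℝ u w := by
  -- `l` is injective on the minimal face of `x`, which is therefore a segment or a point.
  have hdisj := disjoint_faceDirection_ker hP l.toLinearMap hx
  have hinj : Function.Injective (l.toLinearMap.domRestrict (faceDirection hP hx.1.1)) := by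
    rw [← LinearMap.ker_eq_bot, LinearMap.ker_domRestrict]
    exact (Submodule.disjoint_iff_comap_eq_bot.1 hdisj)
  have := FiniteDimensional.of_injective _ hinj
  obtain ⟨u, w, huw, hF⟩ := exists_eq_segment_of_injOn (isCompact_minimalFace hPc hP hx.1.1)
    (convex_minimalFace hP hx.1.1) ⟨x, self_mem_minimalFace hP hx.1.1⟩ l
    (injOn_minimalFace hP hx.1.1 hdisj)
  exact ⟨u, w, huw, hF ▸ isExtreme_minimalFace hP hx.1.1, hF ▸ self_mem_minimalFace hP hx.1.1⟩

theorem exists_orientedEdge_of_mem_extremePoints (hPc : IsCompact P) (hP : Convex ℝ P)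
    (l : E →L[ℝ] ℝ) {t : ℝ} (ht : ∀ v ∈ extremePoints ℝ P, l v ≠ t)
    (hx : x ∈ extremePoints ℝ (P ∩ {y | l y = t})) :
    ∃ e ∈ orientedEdges P, t ∈ Ioo (l e.1) (l e.2) ∧ x ∈ openSegment ℝ e.1 e.2 := by
  obtain ⟨u, w, huw, hext, hxs⟩ := exists_isExtreme_segment hPc hP l hx
  have hu := ht u (hext.extremePoints_subset_extremePoints (left_mem_extremePoints_segment u w))
  have hw : l w ≠ t := by
    rw [segment_symm] at hext
    exact ht w (hext.extremePoints_subset_extremePoints (left_mem_extremePoints_segment w u))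
  have hxt : l x = t := hx.1.2
  have hxo : x ∈ openSegment ℝ u w := mem_openSegment_of_ne_left_right
    (fun h ↦ hu (h ▸ hxt)) (fun h ↦ hw (h ▸ hxt)) hxs
  have hne : u ≠ w := by
    rintro rfl
    rw [segment_same, mem_singleton_iff] at hxs
    exact hu (hxs ▸ hxt)
  obtain ⟨hut, htw⟩ : t ∈ Icc (l u) (l w) := by
    rw [← hxt]
    exact (image_segment_eq_Icc (l := l.toLinearMap) huw).le (mem_image_of_mem l hxs)
  exact ⟨(u, w), ⟨hne, hext⟩, ⟨hut.lt_of_ne hu, htw.lt_of_ne hw.symm⟩, hxo⟩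

theorem ncard_extremePoints_section_s4 (hPc : IsCompact P) (hP : Convex ℝ P) (l : E →L[ℝ] ℝ) {t : ℝ}
    (ht : ∀ v ∈ extremePoints ℝ P, l v ≠ t) :
    (extremePoints ℝ (P ∩ {y | l y = t})).ncard =
      {e ∈ orientedEdges P | t ∈ Ioo (l e.1) (l e.2)}.ncard := by
  have hcross : ∀ e ∈ {e ∈ orientedEdges P | t ∈ Ioo (l e.1) (l e.2)},
      ∃ x ∈ openSegment ℝ e.1 e.2, l x = t := fun e he ↦
    (image_openSegment_eq_Ioo (l := l.toLinearMap) (he.2.1.trans he.2.2)).ge he.2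
  choose! cross hcross_mem hcross_apply using hcross
  have hinj {e : E × E} (he : t ∈ Ioo (l e.1) (l e.2)) : InjOn l (segment ℝ e.1 e.2) :=
    injOn_segment (l := l.toLinearMap) (he.1.trans he.2).ne
  refine (ncard_congr (fun e _ ↦ cross e) (fun e he ↦ ?_) (fun e e' he he' heq ↦ ?_)
    fun x hx ↦ ?_).symm
  · simpa only [hcross_apply e he] using mem_extremePoints_inter_of_isExtreme he.1.2 (hinj he.2)
      (openSegment_subset_segment ℝ _ _ (hcross_mem e he))
  · exact orientedEdge_unique he.1 he'.1 (hcross_mem e he) (heq ▸ hcross_mem e' he') he.2 he'.2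
  · obtain ⟨e, he, het, hxe⟩ := exists_orientedEdge_of_mem_extremePoints hPc hP l ht hx
    exact ⟨e, ⟨he, het⟩, hinj het (openSegment_subset_segment ℝ _ _ (hcross_mem e ⟨he, het⟩))
      (openSegment_subset_segment ℝ _ _ hxe) ((hcross_apply e ⟨he, het⟩).trans hx.1.2.symm)⟩

end Section

section Width

variable {E : Type*} [AddCommGroup E] [Module ℝ E] [TopologicalSpace E] {P : Set E}

/-- The width of `P` in the direction of the functional `f`, meaningful for nonempty bounded `P`. -/
def width (P : Set E) (f : StrongDual ℝ E) : ℝ :=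
  sSup (f '' P) - sInf (f '' P)

theorem sInf_image_le_sSup_image (hPc : IsCompact P) (f : StrongDual ℝ E) :
    sInf (f '' P) ≤ sSup (f '' P) :=
  have hfP := hPc.image f.continuous
  Real.sInf_le_sSup _ hfP.bddBelow hfP.bddAbove

theorem width_zero : width P 0 = 0 := by
  rcases P.eq_empty_or_nonempty with rfl | hne <;> simp [width, *]

theorem image_eq_Icc_sInf_sSup [IsTopologicalAddGroup E] [ContinuousSMul ℝ E] (hPc : IsCompact P)
    (hP : Convex ℝ P) (hne : P.Nonempty) (f : StrongDual ℝ E) :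
    f '' P = Icc (sInf (f '' P)) (sSup (f '' P)) :=
  eq_Icc_of_connected_compact ((hP.isConnected hne).image f f.continuous.continuousOn)
    (hPc.image f.continuous)

theorem width_pos [ContinuousAdd E] [ContinuousSMul ℝ E] (hPc : IsCompact P)
    (hint : (interior P).Nonempty) {f : StrongDual ℝ E} (hf : f ≠ 0) : 0 < width P f := by
  have hfP := hPc.image f.continuous
  have hopen : IsOpen (f '' interior P) := f.isOpenMap_of_ne_zero hf _ isOpen_interior
  have hsub : f '' interior P ⊆ Ioo (sInf (f '' P)) (sSup (f '' P)) := by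
    rw [← interior_Icc]
    exact interior_maximal ((image_mono interior_subset).trans
      (subset_Icc_csInf_csSup hfP.bddBelow hfP.bddAbove)) hopen
  exact sub_pos.2 (nonempty_Ioo.1 ((hint.image f).mono hsub))

end Width

section MeanSection

variable {E : Type*} [AddCommGroup E] [Module ℝ E] [TopologicalSpace E] [IsTopologicalAddGroup E]
  [ContinuousSMul ℝ E] [T2Space E] {P : Set E}

theorem exists_orientedEdge_lt [LocallyConvexSpace ℝ E] (hPc : IsCompact P) (hP : Convex ℝ P)
    (hfin : (extremePoints ℝ P).Finite) {f : StrongDual ℝ E} (hf : 0 < width P f) :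
    ∃ e ∈ orientedEdges P, f e.1 < f e.2 := by
  obtain ⟨t, ht, htV⟩ := ((Ioo_infinite (sub_pos.1 hf)).sdiff (hfin.image f)).nonempty
  have hne : P.Nonempty := by
    by_contra! h
    simp [h, width] at hf
  obtain ⟨x, hx, hxt⟩ := (image_eq_Icc_sInf_sSup hPc hP hne f).ge (Ioo_subset_Icc_self ht)
  have hsec : IsCompact (P ∩ {y | f y = t}) :=
    hPc.inter_right (isClosed_eq f.continuous continuous_const)
  obtain ⟨v, hv⟩ := hsec.extremePoints_nonempty ⟨x, hx, hxt⟩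
  obtain ⟨e, he, hte, -⟩ := exists_orientedEdge_of_mem_extremePoints hPc hP f
    (fun v hv h ↦ htV ⟨v, hv, h⟩) hv
  exact ⟨e, he, hte.1.trans hte.2⟩

theorem ae_ncard_extremePoints_section (hPc : IsCompact P) (hP : Convex ℝ P)
    (hfin : (extremePoints ℝ P).Finite) (f : StrongDual ℝ E) :
    ∀ᵐ t : ℝ, ((extremePoints ℝ (P ∩ {y | f y = t})).ncard : ℝ) =
      ∑ e ∈ (finite_orientedEdges hfin).toFinset,
        (Ioo (f e.1) (f e.2)).indicator (1 : ℝ → ℝ) t := by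
  classical
  have hgeneric : ∀ᵐ t : ℝ, t ∉ f '' extremePoints ℝ P :=
    measure_eq_zero_iff_ae_notMem.1 ((hfin.image f).measure_zero _)
  filter_upwards [hgeneric] with t ht
  have hset : {e ∈ orientedEdges P | t ∈ Ioo (f e.1) (f e.2)} =
      ↑{e ∈ (finite_orientedEdges hfin).toFinset | t ∈ Ioo (f e.1) (f e.2)} := by
    ext; simp
  rw [ncard_extremePoints_section_s4 hPc hP f fun v hv h ↦ ht ⟨v, hv, h⟩, hset, ncard_coe_finset,
    Finset.card_filter]
  simp [indicator_apply]

theorem integral_indicator_Ioo {a b u w : ℝ} (hab : a ≤ b) (hu : a ≤ u) (hw : w ≤ b) :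
    ∫ t in a..b, (Ioo u w).indicator 1 t = max (w - u) 0 := by
  have hsub : Ioc a b ∩ Ioo u w = Ioo u w :=
    inter_eq_right.2 fun t ht ↦ ⟨hu.trans_lt ht.1, ht.2.le.trans hw⟩
  rw [intervalIntegral.integral_of_le hab, setIntegral_indicator measurableSet_Ioo, hsub]
  simp [Measure.real, ENNReal.toReal_ofReal']

theorem integral_ncard_extremePoints_section_eq_sum_max (hPc : IsCompact P) (hP : Convex ℝ P)
    (hfin : (extremePoints ℝ P).Finite) (f : StrongDual ℝ E) :
    ∫ t in sInf (f '' P)..sSup (f '' P), ((extremePoints ℝ (P ∩ {y | f y = t})).ncard : ℝ) =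
      ∑ e ∈ (finite_orientedEdges hfin).toFinset, max (f (e.2 - e.1)) 0 := by
  have hfP := hPc.image f.continuous
  have hintegrable (u w : ℝ) : IntervalIntegrable ((Ioo u w).indicator (1 : ℝ → ℝ)) volume
      (sInf (f '' P)) (sSup (f '' P)) := by
    rw [intervalIntegrable_iff]
    exact (integrableOn_const (by simp)).indicator measurableSet_Ioo
  have hcount := ae_ncard_extremePoints_section hPc hP hfin f
  rw [intervalIntegral.integral_congr_ae (hcount.mono fun t ht _ ↦ ht),
    intervalIntegral.integral_finsetSum fun _ _ ↦ hintegrable _ _]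
  refine Finset.sum_congr rfl fun e he ↦ ?_
  rw [Finite.mem_toFinset] at he
  rw [integral_indicator_Ioo (sInf_image_le_sSup_image hPc f)
    (csInf_le hfP.bddBelow (mem_image_of_mem f (fst_mem_extremePoints he).1))
    (le_csSup hfP.bddAbove (mem_image_of_mem f (snd_mem_extremePoints he).1)), map_sub]

theorem integral_ncard_extremePoints_section (hPc : IsCompact P) (hP : Convex ℝ P)
    (hfin : (extremePoints ℝ P).Finite) (f : StrongDual ℝ E) :
    ∫ t in sInf (f '' P)..sSup (f '' P), ((extremePoints ℝ (P ∩ {y | f y = t})).ncard : ℝ) =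
      1 / 2 * ∑ e ∈ (finite_orientedEdges hfin).toFinset, |f (e.2 - e.1)| := by
  rw [integral_ncard_extremePoints_section_eq_sum_max hPc hP hfin]
  have hswap : ∑ e ∈ (finite_orientedEdges hfin).toFinset, max (-f (e.2 - e.1)) 0 =
      ∑ e ∈ (finite_orientedEdges hfin).toFinset, max (f (e.2 - e.1)) 0 :=
    Finset.sum_equiv (Equiv.prodComm E E)
      (fun e ↦ by simp [← swap_mem_orientedEdges (e := e)]) (fun e _ ↦ by simp)
  simp only [← max_zero_add_max_neg_zero_eq_abs_self, Finset.sum_add_distrib, hswap]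
  ring

end MeanSection

section Generators

variable {E : Type*} [AddCommGroup E] [Module ℝ E]

/-- The vectors `b i` are nonzero and pairwise linearly independent; this is `PairwiseIndep` for an
arbitrary index type and real vector space. -/
def PairwiseNonparallel {ι : Type*} (b : ι → E) : Prop :=
  (∀ i, b i ≠ 0) ∧ ∀ i j, i ≠ j → ∀ c : ℝ, b j ≠ c • b i

theorem exists_sum_abs_eq_of_proportional {n : ℕ} {a : Fin (n + 1) → E} {i j : Fin (n + 1)}
    (hij : i ≠ j) {c : ℝ} (hc : a j = c • a i) :
    ∃ b : Fin n → E, ∀ f : E →ₗ[ℝ] ℝ, ∑ k, |f (b k)| = ∑ k, |f (a k)| := by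
  obtain ⟨i, rfl⟩ := Fin.exists_succAbove_eq hij
  refine ⟨fun k ↦ (1 + if k = i then |c| else 0) • a (j.succAbove k), fun f ↦ ?_⟩
  have hscale (k : Fin n) : |f ((1 + if k = i then |c| else 0) • a (j.succAbove k))| =
      |f (a (j.succAbove k))| + if k = i then |c| * |f (a (j.succAbove k))| else 0 := by
    rw [map_smul, smul_eq_mul, abs_mul, abs_of_nonneg (by positivity)]
    split_ifs <;> ring
  simp_rw [hscale, Finset.sum_add_distrib, Fin.sum_univ_succAbove _ j, hc]
  simp [abs_mul, add_comm]

theorem exists_pairwiseNonparallel_sum_abs_eq {n : ℕ} (a : Fin n → E) :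
    ∃ (m : ℕ) (b : Fin m → E), PairwiseNonparallel b ∧
      ∀ f : E →ₗ[ℝ] ℝ, ∑ i, |f (b i)| = ∑ i, |f (a i)| := by
  induction n with
  | zero => exact ⟨0, a, ⟨(·.elim0), (·.elim0)⟩, fun _ ↦ rfl⟩
  | succ n ih =>
    suffices h : PairwiseNonparallel a ∨
        ∃ b : Fin n → E, ∀ f : E →ₗ[ℝ] ℝ, ∑ k, |f (b k)| = ∑ k, |f (a k)| by
      obtain ha | ⟨b, hb⟩ := h
      · exact ⟨n + 1, a, ha, fun _ ↦ rfl⟩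
      · obtain ⟨m, b', hb', hsum⟩ := ih b
        exact ⟨m, b', hb', fun f ↦ (hsum f).trans (hb f)⟩
    by_cases hzero : ∃ j, a j = 0
    · obtain ⟨j, hj⟩ := hzero
      exact .inr ⟨fun k ↦ a (j.succAbove k), fun f ↦ by simp [Fin.sum_univ_succAbove _ j, hj]⟩
    by_cases hpar : ∃ i j, i ≠ j ∧ ∃ c : ℝ, a j = c • a i
    · obtain ⟨i, j, hij, c, hc⟩ := hpar
      exact .inr (exists_sum_abs_eq_of_proportional hij hc)
    · push Not at hzero hpar
      exact .inl ⟨hzero, hpar⟩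

end Generators

section Zonotope

theorem isCompact_nonempty_sum {M ι : Type*} [AddCommMonoid M] [TopologicalSpace M]
    [ContinuousAdd M] (s : Finset ι) {K : ι → Set M}
    (hK : ∀ i ∈ s, IsCompact (K i) ∧ (K i).Nonempty) :
    IsCompact (∑ i ∈ s, K i) ∧ (∑ i ∈ s, K i).Nonempty :=
  Finset.sum_induction K (fun K ↦ IsCompact K ∧ K.Nonempty)
    (fun _ _ h h' ↦ ⟨h.1.add h'.1, h.2.add h'.2⟩) ⟨isCompact_singleton, singleton_nonempty 0⟩ hK

variable {E : Type*} [AddCommGroup E] [Module ℝ E] [TopologicalSpace E] {K L P : Set E}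

/-- The support function of `K`, which determines `K` among nonempty compact convex sets; it takes
functionals as arguments, so that no inner product is needed. -/
def supportFunction (K : Set E) (f : StrongDual ℝ E) : ℝ :=
  sSup (f '' K)

theorem supportFunction_singleton (x : E) (f : StrongDual ℝ E) : supportFunction {x} f = f x := by
  simp [supportFunction]

theorem supportFunction_segment_zero (a : E) (f : StrongDual ℝ E) :
    supportFunction (segment ℝ 0 a) f = max 0 (f a) := by
  have himage : f '' segment ℝ 0 a = uIcc 0 (f a) := by
    rw [← segment_eq_uIcc, ← map_zero f]
    exact image_segment ℝ f.toLinearMap.toAffineMap 0 a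
  rw [supportFunction, himage]
  exact csSup_Icc inf_le_sup

theorem supportFunction_add (hK : IsCompact K) (hKne : K.Nonempty) (hL : IsCompact L)
    (hLne : L.Nonempty) (f : StrongDual ℝ E) :
    supportFunction (K + L) f = supportFunction K f + supportFunction L f := by
  rw [supportFunction, image_add]
  exact csSup_add (hKne.image f) (hK.image f.continuous).bddAbove (hLne.image f)
    (hL.image f.continuous).bddAbove

theorem supportFunction_sub_self (hP : IsCompact P) (hne : P.Nonempty) (f : StrongDual ℝ E) :
    supportFunction (P - P) f = width P f := by
  rw [supportFunction, image_sub]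
  exact csSup_sub (hne.image f) (hP.image f.continuous).bddAbove (hne.image f)
    (hP.image f.continuous).bddBelow

theorem supportFunction_sum [ContinuousAdd E] {ι : Type*} (s : Finset ι) {K : ι → Set E}
    (hK : ∀ i ∈ s, IsCompact (K i) ∧ (K i).Nonempty) (f : StrongDual ℝ E) :
    supportFunction (∑ i ∈ s, K i) f = ∑ i ∈ s, supportFunction (K i) f := by
  induction s using Finset.cons_induction with
  | empty => exact (supportFunction_singleton 0 f).trans (map_zero f)
  | cons i s hi ih =>
    rw [Finset.forall_mem_cons] at hK
    obtain ⟨hc, hne⟩ := isCompact_nonempty_sum s hK.2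
    rw [Finset.sum_cons, Finset.sum_cons, supportFunction_add hK.1.1 hK.1.2 hc hne, ih hK.2]

variable [IsTopologicalAddGroup E] [ContinuousSMul ℝ E]

theorem isCompact_segment (u w : E) : IsCompact (segment ℝ u w) := by
  rw [← convexHull_pair]
  exact (toFinite _).isCompact_convexHull ℝ

variable [LocallyConvexSpace ℝ E]

theorem subset_of_supportFunction_le (hK : IsCompact K) (hL : Convex ℝ L) (hLc : IsClosed L)
    (hLne : L.Nonempty) (h : ∀ f, supportFunction K f ≤ supportFunction L f) : K ⊆ L := by
  intro x hx
  by_contra hxL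
  obtain ⟨f, u, hLu, hux⟩ := geometric_hahn_banach_closed_point hL hLc hxL
  have hxK : f x ≤ supportFunction K f :=
    le_csSup (hK.image f.continuous).bddAbove (mem_image_of_mem f hx)
  have hLf : supportFunction L f ≤ u :=
    csSup_le (hLne.image f) (forall_mem_image.2 fun y hy ↦ (hLu y hy).le)
  linarith [h f]

variable [T2Space E]

theorem eq_of_supportFunction_eq (hKc : IsCompact K) (hK : Convex ℝ K) (hKne : K.Nonempty)
    (hLc : IsCompact L) (hL : Convex ℝ L) (hLne : L.Nonempty)
    (h : ∀ f, supportFunction K f = supportFunction L f) : K = L :=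
  (subset_of_supportFunction_le hKc hL hLc.isClosed hLne fun f ↦ (h f).le).antisymm
    (subset_of_supportFunction_le hLc hK hKc.isClosed hKne fun f ↦ (h f).ge)

theorem sub_self_eq_of_width_eq (hPc : IsCompact P) (hP : Convex ℝ P) (hne : P.Nonempty)
    {ι : Type*} [Fintype ι] (a : ι → E) (h : ∀ f, width P f = 1 / 2 * ∑ i, |f (a i)|) :
    P - P = {-((1 / 2 : ℝ) • ∑ i, a i)} + ∑ i, segment ℝ 0 (a i) := by
  have hseg : ∀ i ∈ Finset.univ, IsCompact (segment ℝ 0 (a i)) ∧ (segment ℝ 0 (a i)).Nonempty :=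
    fun i _ ↦ ⟨isCompact_segment _ _, 0, left_mem_segment _ _ _⟩
  obtain ⟨hsumc, hsumne⟩ := isCompact_nonempty_sum _ hseg
  have hdiff : IsCompact (P - P) := by
    rw [sub_eq_add_neg]
    exact hPc.add hPc.neg
  refine eq_of_supportFunction_eq hdiff (hP.sub hP) (hne.sub hne)
    (isCompact_singleton.add hsumc)
    ((convex_singleton _).add (convex_sum _ fun i _ ↦ convex_segment _ _))
    ((singleton_nonempty _).add hsumne) fun f ↦ ?_
  have habs (r : ℝ) : 1 / 2 * |r| = max 0 r - 1 / 2 * r := by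
    rcases le_total 0 r with hr | hr
    · rw [abs_of_nonneg hr, max_eq_right hr]
      ring
    · rw [abs_of_nonpos hr, max_eq_left hr]
      ring
  rw [supportFunction_sub_self hPc hne, h,
    supportFunction_add isCompact_singleton (singleton_nonempty _) hsumc hsumne,
    supportFunction_sum _ hseg]
  simp only [supportFunction_singleton, supportFunction_segment_zero, Finset.mul_sum, habs,
    Finset.sum_sub_distrib, map_neg, map_smul, map_sum, smul_eq_mul]
  ring

end Zonotope

section ConstantMean

variable {E : Type*} [AddCommGroup E] [Module ℝ E] [TopologicalSpace E] [IsTopologicalAddGroup E]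
  [ContinuousSMul ℝ E] [T2Space E] {P : Set E} {lam : ℝ}

/-- The mean number of vertices of the sections of `P` by the level hyperplanes of `f`: the quantity
`A(P, z)`, with the vector `z` replaced by a functional. It is `0` when the width of `P` is. -/
def meanVertexCount (P : Set E) (f : StrongDual ℝ E) : ℝ :=
  (width P f)⁻¹ *
    ∫ t in sInf (f '' P)..sSup (f '' P), ((extremePoints ℝ (P ∩ {y | f y = t})).ncard : ℝ)

theorem meanVertexCount_mul_width (hPc : IsCompact P) (hP : Convex ℝ P)
    (hfin : (extremePoints ℝ P).Finite) {f : StrongDual ℝ E} (hf : 0 < width P f) :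
    meanVertexCount P f * width P f =
      1 / 2 * ∑ e ∈ (finite_orientedEdges hfin).toFinset, |f (e.2 - e.1)| := by
  rw [meanVertexCount, integral_ncard_extremePoints_section hPc hP hfin]
  field_simp

variable [LocallyConvexSpace ℝ E]

theorem meanVertexCount_pos (hPc : IsCompact P) (hP : Convex ℝ P)
    (hfin : (extremePoints ℝ P).Finite) {f : StrongDual ℝ E} (hf : 0 < width P f) :
    0 < meanVertexCount P f := by
  obtain ⟨e, he, hlt⟩ := exists_orientedEdge_lt hPc hP hfin hf
  refine pos_of_mul_pos_left ?_ hf.le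
  rw [meanVertexCount_mul_width hPc hP hfin hf]
  have hpos : 0 < |f (e.2 - e.1)| := abs_pos.2 (by simpa using (sub_pos.2 hlt).ne')
  exact mul_pos (by norm_num)
    (Finset.sum_pos' (fun _ _ ↦ abs_nonneg _) ⟨e, by simpa using he, hpos⟩)

theorem width_eq_of_meanVertexCount_eq (hPc : IsCompact P) (hP : Convex ℝ P)
    (hfin : (extremePoints ℝ P).Finite) (hint : (interior P).Nonempty)
    (hmean : ∀ f ≠ 0, meanVertexCount P f = lam) (f : StrongDual ℝ E) :
    width P f = 1 / 2 * ∑ e ∈ (finite_orientedEdges hfin).toFinset, |f (lam⁻¹ • (e.2 - e.1))| := by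
  obtain rfl | hf := eq_or_ne f 0
  · simp [width_zero]
  have hw := width_pos hPc hint hf
  have hlam : 0 < lam := hmean f hf ▸ meanVertexCount_pos hPc hP hfin hw
  have hmul := meanVertexCount_mul_width hPc hP hfin hw
  rw [hmean f hf] at hmul
  simp_rw [map_smul, smul_eq_mul, abs_mul, abs_of_pos (inv_pos.2 hlam), ← Finset.mul_sum]
  rw [mul_left_comm, ← hmul, inv_mul_cancel_left₀ hlam.ne']

theorem exists_generators_of_meanVertexCount_eq (hPc : IsCompact P) (hP : Convex ℝ P)
    (hfin : (extremePoints ℝ P).Finite) (hint : (interior P).Nonempty)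
    (hmean : ∀ f ≠ 0, meanVertexCount P f = lam) :
    ∃ (n : ℕ) (a : Fin n → E), PairwiseNonparallel a ∧
      P - P = {-((1 / 2 : ℝ) • ∑ i, a i)} + ∑ i, segment ℝ 0 (a i) := by
  let edges := (finite_orientedEdges hfin).toFinset
  let v (i : Fin edges.card) : E :=
    lam⁻¹ • ((edges.equivFin.symm i).1.2 - (edges.equivFin.symm i).1.1)
  obtain ⟨n, a, ha, hsum⟩ := exists_pairwiseNonparallel_sum_abs_eq v
  refine ⟨n, a, ha, sub_self_eq_of_width_eq hPc hP (hint.mono interior_subset) a fun f ↦ ?_⟩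
  have hv : ∑ i, |f (v i)| = ∑ e ∈ edges, |f (lam⁻¹ • (e.2 - e.1))| := by
    rw [← edges.sum_coe_sort]
    exact edges.equivFin.symm.sum_comp fun e ↦ |f (lam⁻¹ • (e.1.2 - e.1.1))|
  rw [width_eq_of_meanVertexCount_eq hPc hP hfin hint hmean, ← hv]
  exact congrArg _ (hsum f.toLinearMap).symm

end ConstantMean

section DotProduct

variable {d : ℕ} {P : Set (Fin d → ℝ)}

theorem exists_dotp_eq (f : StrongDual ℝ (Fin d → ℝ)) : ∃ z, dotp z = f := by
  obtain ⟨z, hz⟩ := (dotProductEquiv ℝ (Fin d)).surjective f.toLinearMap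
  exact ⟨z, congrArg DFunLike.coe hz⟩

theorem avgVert_eq_meanVertexCount {z : Fin d → ℝ} {f : StrongDual ℝ (Fin d → ℝ)}
    (hf : dotp z = f) : avgVert P z = meanVertexCount P f := by
  simp only [avgVert, meanVertexCount, tMax, tMin, nVert, width, hf]

theorem IsPolytope.isCompact (hP : IsPolytope P) : IsCompact P := by
  obtain ⟨s, rfl⟩ := hP
  exact s.finite_toSet.isCompact_convexHull ℝ

theorem IsPolytope.convex (hP : IsPolytope P) : Convex ℝ P := by
  obtain ⟨s, rfl⟩ := hP
  exact convex_convexHull ℝ _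

theorem IsPolytope.finite_extremePoints (hP : IsPolytope P) : (extremePoints ℝ P).Finite := by
  obtain ⟨s, rfl⟩ := hP
  exact s.finite_toSet.subset extremePoints_convexHull_subset

end DotProduct

/-- Lemma 2.2. If `P ⊂ ℝ^d` is a convex polytope with nonempty interior
and `A(P,z)` is a constant independent of `z`, then `P - P` is a zonotope. -/
theorem diffBody_isZonotope (d : ℕ) (P : Set (Fin d → ℝ)) (hP : IsPolytope P)
    (hint : (interior P).Nonempty) (lam : ℝ)
    (havg : ∀ z : Fin d → ℝ, z ≠ 0 → avgVert P z = lam) :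
    IsZonotope (P - P) := by
  have hmean : ∀ f ≠ 0, meanVertexCount P f = lam := by
    intro f hf
    obtain ⟨z, hz⟩ := exists_dotp_eq f
    have hz0 : z ≠ 0 := by
      rintro rfl
      exact hf (ContinuousLinearMap.ext fun x ↦ by simp [← hz, dotp])
    rw [← avgVert_eq_meanVertexCount hz, havg z hz0]
  obtain ⟨n, a, ha, hPP⟩ := exists_generators_of_meanVertexCount_eq hP.isCompact hP.convex
    hP.finite_extremePoints hint hmean
  exact ⟨n, a, _, ha, hPP⟩
end
end
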